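/- Let (C, D) be an out-j collapsible pair with D nonempty. If D is contractible, then the number of outwardly matched j-faces is zero, i.e., the collapsing sequence restricts to a collapsing sequence of D onto a vertex; hence D is collapsible. -/

import Mathlib

/-- An abstract (finite, graded) face poset carrying a dimension function and a
codimension-one face ("facet") relation, modelling the combinatorics of a
finite regular CW complex. -/
structure MorseSetup (F : Type) where
  dim : F → ℕ
  facet : F → F → Prop
  facet_dim : ∀ σ τ, facet σ τ → dim τ = dim σ + 1

/-- A discrete vector field: pairs `(σ, Σ)` with `σ` a codimension-one face of `Σ`,
no face belonging to two different pairs. -/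
def IsDVF {F : Type} (S : MorseSetup F) (Φ : Finset (F × F)) : Prop :=
  (∀ p ∈ Φ, S.facet p.1 p.2) ∧
  ∀ p ∈ Φ, ∀ q ∈ Φ, p ≠ q → p.1 ≠ q.1 ∧ p.1 ≠ q.2 ∧ p.2 ≠ q.1 ∧ p.2 ≠ q.2

/-- Existence of a closed gradient path `(σ_0,Σ_0),…,(σ_k,Σ_k)`, `k ≥ 1`,
with `σ_{i+1} ≠ σ_i`, `σ_{i+1}` a facet of `Σ_i` and `σ_0 = σ_k`. -/
def HasClosedGradientPath {F : Type} (S : MorseSetup F) (Φ : Finset (F × F)) : Prop :=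
  ∃ (k : ℕ) (σ T : ℕ → F), 1 ≤ k ∧
    (∀ i ≤ k, (σ i, T i) ∈ Φ) ∧
    (∀ i < k, σ (i + 1) ≠ σ i ∧ S.facet (σ (i + 1)) (T i)) ∧
    σ 0 = σ k

/-- A Morse matching is a discrete vector field without closed gradient paths. -/
def IsMorseMatching {F : Type} (S : MorseSetup F) (Φ : Finset (F × F)) : Prop :=
  IsDVF S Φ ∧ ¬ HasClosedGradientPath S Φ

/-- A face is critical if it belongs to no matching pair. -/
def IsCritical {F : Type} (Φ : Finset (F × F)) (x : F) : Prop :=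
  ∀ p ∈ Φ, x ≠ p.1 ∧ x ≠ p.2

/-- A face `τ` of the subcomplex `D` is outwardly matched if it is matched with
a face not belonging to `D`. -/
def OutwardlyMatched {F : Type} (Φ : Finset (F × F)) (D : Finset F) (τ : F) : Prop :=
  τ ∈ D ∧ ∃ p ∈ Φ, (p.1 = τ ∧ p.2 ∉ D) ∨ (p.2 = τ ∧ p.1 ∉ D)

/-- A collapsing sequence from the whole complex to the vertex `v`: a Morse matching
whose unique critical face is the vertex `v`. -/
def IsCollapsingSeq {F : Type} (S : MorseSetup F) (Φ : Finset (F × F)) (v : F) : Prop :=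
  IsMorseMatching S Φ ∧ S.dim v = 0 ∧ ∀ x, IsCritical Φ x ↔ x = v

/-- `(C, D)` is out-`j` collapsible via `Φ`: `Φ` is a collapsing sequence from `C`
to a vertex of `D` in which every outwardly matched face has dimension `j`. -/
def IsOutJCollapsingSeq {F : Type} (S : MorseSetup F) (Φ : Finset (F × F))
    (D : Finset F) (j : ℕ) : Prop :=
  (∃ v ∈ D, IsCollapsingSeq S Φ v) ∧ ∀ τ, OutwardlyMatched Φ D τ → S.dim τ = j

/-- `D` is a subcomplex: closed under passing to codimension-one faces. -/
def IsSubcomplex {F : Type} (S : MorseSetup F) (D : Finset F) : Prop :=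
  ∀ σ τ, S.facet σ τ → τ ∈ D → σ ∈ D

open Metric in
/-- A (finite) regular CW structure on the topological space `X`, with faces indexed by `F`:
each face has a characteristic map from a closed ball which is a continuous injection
(regularity), open cells are pairwise disjoint and cover `X`, and the boundary of each cell
lies in the union of the closed cells of lower dimension. -/
structure RegularCW (F : Type) [Fintype F] (X : Type) [TopologicalSpace X] where
  dim : F → ℕ
  charMap : (f : F) → (closedBall (0 : EuclideanSpace ℝ (Fin (dim f))) 1) → X
  continuous_charMap : ∀ f, Continuous (charMap f)
  injective_charMap : ∀ f, Function.Injective (charMap f)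
  disjoint_openCells : ∀ f g, f ≠ g →
    Disjoint (charMap f '' {x | ‖(x : EuclideanSpace ℝ (Fin (dim f)))‖ < 1})
      (charMap g '' {x | ‖(x : EuclideanSpace ℝ (Fin (dim g)))‖ < 1})
  cover : (⋃ f, Set.range (charMap f)) = Set.univ
  boundary : ∀ f, charMap f '' {x | ‖(x : EuclideanSpace ℝ (Fin (dim f)))‖ = 1} ⊆
    ⋃ g ∈ {g | dim g < dim f}, Set.range (charMap g)

/-- The closed cell of the face `f`. -/
def RegularCW.cell {F X : Type} [Fintype F] [TopologicalSpace X]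
    (C : RegularCW F X) (f : F) : Set X :=
  Set.range (C.charMap f)

/-- The face structure underlying a regular CW complex: `σ` is a codimension-one face of
`τ` if the closed cell of `σ` is contained in that of `τ` and dimensions differ by one. -/
def RegularCW.toSetup {F X : Type} [Fintype F] [TopologicalSpace X]
    (C : RegularCW F X) : MorseSetup F where
  dim := C.dim
  facet := fun σ τ => σ ≠ τ ∧ C.cell σ ⊆ C.cell τ ∧ C.dim τ = C.dim σ + 1
  facet_dim := fun _ _ h => h.2.2

/-- `D` is a subcomplex of the regular CW complex: it is closed under taking faces. -/
def RegularCW.Subcomplex {F X : Type} [Fintype F] [TopologicalSpace X]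
    (C : RegularCW F X) (D : Finset F) : Prop :=
  ∀ σ τ, C.cell σ ⊆ C.cell τ → τ ∈ D → σ ∈ D

/-- The geometric realization (underlying point set) of the subcomplex `D`. -/
def RegularCW.real {F X : Type} [Fintype F] [TopologicalSpace X]
    (C : RegularCW F X) (D : Finset F) : Set X :=
  ⋃ f ∈ D, C.cell f

/-- A collapsing sequence of the subcomplex `D` onto a vertex `v ∈ D`: a Morse matching
all of whose pairs consist of faces of `D`, whose unique critical face in `D` is `v`. -/
def IsCollapsingSeqOn {F : Type} (S : MorseSetup F) (Φ : Finset (F × F))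
    (D : Finset F) (v : F) : Prop :=
  IsMorseMatching S Φ ∧ v ∈ D ∧ S.dim v = 0 ∧
    (∀ p ∈ Φ, p.1 ∈ D ∧ p.2 ∈ D) ∧ ∀ x ∈ D, (IsCritical Φ x ↔ x = v)


namespace AS

set_option linter.unusedSectionVars false

open scoped Uniformity

/-- The (augmented) Alexander-Spanier coboundary modulo two, on functions of lists. -/
def dd {E : Type} : (List E → ZMod 2) → List E → ZMod 2
  | _, [] => 0
  | φ, x :: l => φ l + dd (fun m => φ (x :: m)) l

/-- The prism operator of two maps. -/
def pr {E E' : Type} (f g : E → E') : (List E' → ZMod 2) → List E → ZMod 2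
  | _, [] => 0
  | φ, x :: l => φ (f x :: g x :: l.map g) + pr f g (fun m => φ (f x :: m)) l

theorem two_cancel (a : ZMod 2) : a + a = 0 := CharTwo.add_self_eq_zero a

theorem dd_add {E : Type} (l : List E) : ∀ (φ ψ : List E → ZMod 2),
    dd (fun m => φ m + ψ m) l = dd φ l + dd ψ l := by
  induction l with
  | nil => intro φ ψ; simp [dd]
  | cons x l ih => intro φ ψ; simp only [dd, ih]; ring

theorem dd_smul {E : Type} (l : List E) : ∀ (c : ZMod 2) (φ : List E → ZMod 2),
    dd (fun m => c * φ m) l = c * dd φ l := by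
  induction l with
  | nil => intro c φ; simp [dd]
  | cons x l ih => intro c φ; simp only [dd, ih]; ring

theorem pr_add {E E' : Type} (f g : E → E') (l : List E) : ∀ (φ ψ : List E' → ZMod 2),
    pr f g (fun m => φ m + ψ m) l = pr f g φ l + pr f g ψ l := by
  induction l with
  | nil => intro φ ψ; simp [pr]
  | cons x l ih => intro φ ψ; simp only [pr, ih]; ring

theorem dd_map {E E' : Type} (g : E → E') (l : List E) : ∀ (φ : List E' → ZMod 2),
    dd φ (l.map g) = dd (fun m => φ (m.map g)) l := by
  induction l with
  | nil => intro φ; simp [dd]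
  | cons x l ih => intro φ; simp only [dd, List.map_cons, ih]

theorem dd_dd {E : Type} (l : List E) : ∀ (φ : List E → ZMod 2), dd (dd φ) l = 0 := by
  induction l with
  | nil => intro φ; simp [dd]
  | cons x l ih =>
    intro φ
    simp only [dd, dd_add]
    rw [ih, add_zero]
    exact two_cancel _

theorem prism {E E' : Type} (f g : E → E') (l : List E) : ∀ (φ : List E' → ZMod 2),
    dd (pr f g φ) l + pr f g (dd φ) l = φ (l.map f) + φ (l.map g) := by
  induction l with
  | nil => intro φ; simp [dd, pr, two_cancel]
  | cons x l ih =>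
    intro φ
    have h := ih (fun m => φ (f x :: m))
    simp only [dd, pr, dd_add, pr_add, List.map_cons, dd_map]
    have h1 := two_cancel (pr f g φ l)
    have h2 := two_cancel (dd (fun m => φ (f x :: g x :: m.map g)) l)
    have h3 := two_cancel (φ (f x :: l.map g))
    linear_combination h + h1 + h2 + h3

theorem dd_congr {E : Type} (l : List E) : ∀ (φ ψ : List E → ZMod 2),
    (∀ m, m.Sublist l → m.length + 1 = l.length → φ m = ψ m) → dd φ l = dd ψ l := by
  induction l with
  | nil => intro φ ψ h; simp [dd]
  | cons x l ih =>
    intro φ ψ h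
    simp only [dd]
    rw [h l (List.sublist_cons_self x l) (by simp)]
    rw [ih (fun m => φ (x :: m)) (fun m => ψ (x :: m))]
    intro m hm hl
    exact h _ (hm.cons_cons x) (by simpa using hl)

theorem dd_zero {E : Type} (l : List E) (φ : List E → ZMod 2)
    (h : ∀ m, m.Sublist l → m.length + 1 = l.length → φ m = 0) : dd φ l = 0 := by
  rw [dd_congr l φ (fun _ => 0) h]
  have := dd_smul l 0 (fun _ => 0)
  simpa using this

theorem pr_zero {E E' : Type} (f g : E → E') (l : List E) : ∀ (φ : List E' → ZMod 2),
    (∀ m, m.length = l.length + 1 → (∀ y ∈ m, ∃ x ∈ l, y = f x ∨ y = g x) → φ m = 0) →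
    pr f g φ l = 0 := by
  induction l with
  | nil => intro φ h; simp [pr]
  | cons x l ih =>
    intro φ h
    simp only [pr]
    rw [h, ih, add_zero]
    · intro m hm hy
      apply h
      · simp [hm]
      · intro y hy'
        rcases List.mem_cons.1 hy' with rfl | hy'
        · exact ⟨x, by simp, Or.inl rfl⟩
        · obtain ⟨x', hx', hh⟩ := hy y hy'
          exact ⟨x', by simp [hx'], hh⟩
    · simp
    · intro y hy
      simp only [List.mem_cons, List.mem_map] at hy
      rcases hy with rfl | rfl | ⟨a, ha, rfl⟩
      · exact ⟨x, by simp, Or.inl rfl⟩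
      · exact ⟨x, by simp, Or.inr rfl⟩
      · exact ⟨a, by simp [ha], Or.inr rfl⟩

/-- The coboundary as a linear map. -/
def dL (E : Type) : (List E → ZMod 2) →ₗ[ZMod 2] (List E → ZMod 2) where
  toFun := dd
  map_add' φ ψ := by funext l; exact dd_add l φ ψ
  map_smul' c φ := by funext l; exact dd_smul l c φ

@[simp] theorem dL_apply {E : Type} (φ : List E → ZMod 2) : dL E φ = dd φ := rfl

theorem dL_dL {E : Type} (φ : List E → ZMod 2) : dL E (dL E φ) = 0 := by
  funext l; exact dd_dd l φ

variable {E : Type} [UniformSpace E]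

/-- `U`-small lists of length `n` in `A`. -/
def Sm (U : Set (E × E)) (A : Set E) (n : ℕ) (l : List E) : Prop :=
  l.length = n ∧ (∀ x ∈ l, x ∈ A) ∧ ∀ x ∈ l, ∀ y ∈ l, (x, y) ∈ U

theorem Sm.mono {U V : Set (E × E)} {A B : Set E} {n : ℕ} {l : List E} (h : Sm U A n l)
    (hU : U ⊆ V) (hA : A ⊆ B) : Sm V B n l :=
  ⟨h.1, fun x hx => hA (h.2.1 x hx), fun x hx y hy => hU (h.2.2 x hx y hy)⟩

theorem Sm.sub {U : Set (E × E)} {A : Set E} {n : ℕ} {l m : List E} (h : Sm U A (n + 1) l)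
    (hm : m.Sublist l) (hl : m.length + 1 = l.length) : Sm U A n m :=
  ⟨by have := h.1; omega, fun x hx => h.2.1 x (hm.subset hx),
    fun x hx y hy => h.2.2 x (hm.subset hx) y (hm.subset hy)⟩

/-- Cochains vanishing on all sufficiently small lists of length `n` in `A`. -/
def NN (n : ℕ) (A : Set E) : Submodule (ZMod 2) (List E → ZMod 2) where
  carrier := {φ | ∃ U ∈ 𝓤 E, ∀ l, Sm U A n l → φ l = 0}
  add_mem' := by
    rintro φ ψ ⟨U, hU, h⟩ ⟨V, hV, h'⟩
    refine ⟨U ∩ V, Filter.inter_mem hU hV, fun l hl => ?_⟩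
    simp [h l (hl.mono Set.inter_subset_left subset_rfl),
      h' l (hl.mono Set.inter_subset_right subset_rfl)]
  zero_mem' := ⟨Set.univ, Filter.univ_mem, fun _ _ => rfl⟩
  smul_mem' := by
    rintro c φ ⟨U, hU, h⟩
    exact ⟨U, hU, fun l hl => by simp [h l hl]⟩

theorem mem_NN {n : ℕ} {A : Set E} {φ : List E → ZMod 2} :
    φ ∈ NN n A ↔ ∃ U ∈ 𝓤 E, ∀ l, Sm U A n l → φ l = 0 := Iff.rfl

theorem NN_anti {n : ℕ} {A B : Set E} (h : B ⊆ A) : NN n A ≤ NN n B := by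
  rintro φ ⟨U, hU, hh⟩
  exact ⟨U, hU, fun l hl => hh l (hl.mono subset_rfl h)⟩

theorem dd_mem_NN {n : ℕ} {A : Set E} {φ : List E → ZMod 2} (h : φ ∈ NN n A) :
    dL E φ ∈ NN (n + 1) A := by
  obtain ⟨U, hU, hh⟩ := h
  exact ⟨U, hU, fun l hl => dd_zero l φ fun m hm hml => hh m (hl.sub hm hml)⟩

/-- Relative cocycles in degree `k`. -/
def ZZ (k : ℕ) (A B : Set E) : Submodule (ZMod 2) (List E → ZMod 2) :=
  NN (k + 1) B ⊓ (NN (k + 2) A).comap (dL E)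

/-- Relative coboundaries in degree `k`. -/
def BB (k : ℕ) (A B : Set E) : Submodule (ZMod 2) (List E → ZMod 2) :=
  NN (k + 1) A ⊔ (NN k B).map (dL E)

theorem mem_ZZ {k : ℕ} {A B : Set E} {φ : List E → ZMod 2} :
    φ ∈ ZZ k A B ↔ φ ∈ NN (k + 1) B ∧ dL E φ ∈ NN (k + 2) A := Iff.rfl

theorem mem_BB {k : ℕ} {A B : Set E} {φ : List E → ZMod 2} :
    φ ∈ BB k A B ↔ ∃ α ∈ NN (k + 1) A, ∃ β ∈ NN k B, α + dL E β = φ := by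
  simp only [BB, Submodule.mem_sup, Submodule.mem_map]
  constructor
  · rintro ⟨α, hα, _, ⟨β, hβ, rfl⟩, h⟩; exact ⟨α, hα, β, hβ, h⟩
  · rintro ⟨α, hα, β, hβ, h⟩; exact ⟨α, hα, _, ⟨β, hβ, rfl⟩, h⟩

/-- Relative cohomology in degree `k`. -/
abbrev HH (k : ℕ) (A B : Set E) : Type :=
  ↥(ZZ k A B) ⧸ (BB k A B).comap (ZZ k A B).subtype

variable {E' : Type} [UniformSpace E']

/-- Map induced on cohomology by a linear map of cochains. -/
def Hm {k k' : ℕ} {A B : Set E} {A' B' : Set E'}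
    (T : (List E → ZMod 2) →ₗ[ZMod 2] (List E' → ZMod 2))
    (hZ : ∀ φ ∈ ZZ k A B, T φ ∈ ZZ k' A' B') (hB : ∀ φ ∈ BB k A B, T φ ∈ BB k' A' B') :
    HH k A B →ₗ[ZMod 2] HH k' A' B' :=
  Submodule.mapQ _ _ (T.restrict hZ) (by
    intro φ hφ
    exact hB _ hφ)

theorem HH_ind {k : ℕ} {A B : Set E} (x : HH k A B) :
    ∃ φ, ∃ h : φ ∈ ZZ k A B, x = Submodule.Quotient.mk ⟨φ, h⟩ := by
  obtain ⟨⟨φ, h⟩, rfl⟩ := Submodule.Quotient.mk_surjective _ x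
  exact ⟨φ, h, rfl⟩

theorem mk_eq {k : ℕ} {A B : Set E} {φ ψ : List E → ZMod 2} (hφ : φ ∈ ZZ k A B)
    (hψ : ψ ∈ ZZ k A B) :
    ((Submodule.Quotient.mk ⟨φ, hφ⟩ : HH k A B) = Submodule.Quotient.mk ⟨ψ, hψ⟩) ↔
      φ - ψ ∈ BB k A B := by
  rw [Submodule.Quotient.eq]; rfl

theorem mk_eq_zero {k : ℕ} {A B : Set E} {φ : List E → ZMod 2} (hφ : φ ∈ ZZ k A B) :
    ((Submodule.Quotient.mk ⟨φ, hφ⟩ : HH k A B) = 0) ↔ φ ∈ BB k A B := by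
  rw [Submodule.Quotient.mk_eq_zero]; rfl

theorem Hm_mk {k k' : ℕ} {A B : Set E} {A' B' : Set E'}
    (T : (List E → ZMod 2) →ₗ[ZMod 2] (List E' → ZMod 2))
    (hZ : ∀ φ ∈ ZZ k A B, T φ ∈ ZZ k' A' B') (hB : ∀ φ ∈ BB k A B, T φ ∈ BB k' A' B')
    {φ : List E → ZMod 2} (hφ : φ ∈ ZZ k A B) :
    Hm T hZ hB (Submodule.Quotient.mk ⟨φ, hφ⟩) = Submodule.Quotient.mk ⟨T φ, hZ φ hφ⟩ := rfl

theorem exists_les {A B C : Set E} (hBA : B ⊆ A) (hCB : C ⊆ B) :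
    ∃ (i : ∀ k, HH k A B →ₗ[ZMod 2] HH k A C) (r : ∀ k, HH k A C →ₗ[ZMod 2] HH k B C)
      (δ : ∀ k, HH k B C →ₗ[ZMod 2] HH (k + 1) A B),
      Function.Injective (i 0) ∧ (∀ k, LinearMap.range (i k) = LinearMap.ker (r k)) ∧
      (∀ k, LinearMap.range (r k) = LinearMap.ker (δ k)) ∧
      (∀ k, LinearMap.range (δ k) = LinearMap.ker (i (k + 1))) := by
  have iZ : ∀ k, ∀ φ ∈ ZZ k A B, LinearMap.id (R := ZMod 2) φ ∈ ZZ k A C := fun k φ h =>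
    ⟨NN_anti hCB h.1, h.2⟩
  have iB : ∀ k, ∀ φ ∈ BB k A B, LinearMap.id (R := ZMod 2) φ ∈ BB k A C := by
    intro k φ h
    obtain ⟨α, hα, β, hβ, rfl⟩ := mem_BB.1 h
    exact mem_BB.2 ⟨α, hα, β, NN_anti hCB hβ, rfl⟩
  have rZ : ∀ k, ∀ φ ∈ ZZ k A C, LinearMap.id (R := ZMod 2) φ ∈ ZZ k B C := fun k φ h =>
    ⟨h.1, NN_anti hBA h.2⟩
  have rB : ∀ k, ∀ φ ∈ BB k A C, LinearMap.id (R := ZMod 2) φ ∈ BB k B C := by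
    intro k φ h
    obtain ⟨α, hα, β, hβ, rfl⟩ := mem_BB.1 h
    exact mem_BB.2 ⟨α, NN_anti hBA hα, β, hβ, rfl⟩
  have dZ : ∀ k, ∀ φ ∈ ZZ k B C, dL E φ ∈ ZZ (k + 1) A B := fun k φ h =>
    mem_ZZ.2 ⟨h.2, by rw [dL_dL]; exact Submodule.zero_mem _⟩
  have dB : ∀ k, ∀ φ ∈ BB k B C, dL E φ ∈ BB (k + 1) A B := by
    intro k φ h
    obtain ⟨α, hα, β, hβ, rfl⟩ := mem_BB.1 h
    exact mem_BB.2 ⟨0, Submodule.zero_mem _, α, hα, by rw [map_add, dL_dL]; simp⟩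
  refine ⟨fun k => Hm _ (iZ k) (iB k), fun k => Hm _ (rZ k) (rB k), fun k => Hm _ (dZ k) (dB k),
    ?_, ?_, ?_, ?_⟩
  · rw [← LinearMap.ker_eq_bot, LinearMap.ker_eq_bot']
    intro x hx
    obtain ⟨φ, h, rfl⟩ := HH_ind x
    rw [Hm_mk, mk_eq_zero] at hx
    rw [mk_eq_zero]
    obtain ⟨α, hα, β, hβ, hh⟩ := mem_BB.1 hx
    refine mem_BB.2 ⟨φ, ?_, 0, Submodule.zero_mem _, by rw [map_zero, add_zero]⟩
    have : φ = α + dL E β := hh.symm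
    rw [this]
    refine Submodule.add_mem _ hα ⟨Set.univ, Filter.univ_mem, ?_⟩
    intro l hl
    obtain ⟨V, hV, hβ⟩ := hβ
    refine dd_zero _ _ ?_
    intro m hm hml
    have h1 := hl.1
    have : m = [] := by
      apply List.length_eq_zero_iff.1; omega
    subst this
    exact hβ [] ⟨rfl, by simp, by simp⟩
  · intro k
    ext x
    obtain ⟨φ, h, rfl⟩ := HH_ind x
    rw [LinearMap.mem_ker, Hm_mk, mk_eq_zero]
    constructor
    · rintro ⟨y, hy⟩
      obtain ⟨ψ, h', rfl⟩ := HH_ind y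
      rw [Hm_mk, mk_eq] at hy
      obtain ⟨α, hα, β, hβ, hh⟩ := mem_BB.1 hy
      refine mem_BB.2 ⟨ψ - α, Submodule.sub_mem _ h'.1 (NN_anti hBA hα), -β,
        Submodule.neg_mem _ hβ, ?_⟩
      have : ψ - φ = α + dL E β := hh.symm
      rw [map_neg]
      simp only [LinearMap.id_apply]
      rw [show φ = ψ - (ψ - φ) by abel, this]; abel
    · intro hx
      obtain ⟨α, hα, β, hβ, hh⟩ := mem_BB.1 hx
      have hh : α + dL E β = φ := hh
      have hαZ : α ∈ ZZ k A B := by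
        refine mem_ZZ.2 ⟨hα, ?_⟩
        rw [show dL E α = dL E φ by rw [← hh, map_add, dL_dL, add_zero]]
        exact h.2
      refine ⟨Submodule.Quotient.mk ⟨α, hαZ⟩, ?_⟩
      rw [Hm_mk, mk_eq]
      refine mem_BB.2 ⟨0, Submodule.zero_mem _, -β, Submodule.neg_mem _ hβ, ?_⟩
      rw [← hh, map_neg]
      simp only [LinearMap.id_apply]; abel
  · intro k
    ext x
    obtain ⟨φ, h, rfl⟩ := HH_ind x
    rw [LinearMap.mem_ker, Hm_mk, mk_eq_zero]
    constructor
    · rintro ⟨y, hy⟩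
      obtain ⟨ψ, h', rfl⟩ := HH_ind y
      rw [Hm_mk, mk_eq] at hy
      obtain ⟨α, hα, β, hβ, hh⟩ := mem_BB.1 hy
      have hh : α + dL E β = ψ - φ := hh
      refine mem_BB.2 ⟨dL E ψ, h'.2, -α, Submodule.neg_mem _ hα, ?_⟩
      rw [show φ = ψ - (ψ - φ) by abel, ← hh, map_neg, map_sub, map_add, dL_dL]; abel
    · intro hx
      obtain ⟨α, hα, β, hβ, hh⟩ := mem_BB.1 hx
      have hZ : φ - β ∈ ZZ k A C := by
        refine mem_ZZ.2 ⟨Submodule.sub_mem _ h.1 (NN_anti hCB hβ), ?_⟩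
        rw [map_sub, ← hh, add_sub_cancel_right]; exact hα
      refine ⟨Submodule.Quotient.mk ⟨φ - β, hZ⟩, ?_⟩
      rw [Hm_mk, mk_eq]
      refine mem_BB.2 ⟨-β, Submodule.neg_mem _ hβ, 0, Submodule.zero_mem _, ?_⟩
      simp only [LinearMap.id_apply, map_zero]; abel
  · intro k
    ext x
    obtain ⟨φ, h, rfl⟩ := HH_ind x
    rw [LinearMap.mem_ker, Hm_mk, mk_eq_zero]
    constructor
    · rintro ⟨y, hy⟩
      obtain ⟨ψ, h', rfl⟩ := HH_ind y
      rw [Hm_mk, mk_eq] at hy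
      obtain ⟨α, hα, β, hβ, hh⟩ := mem_BB.1 hy
      refine mem_BB.2 ⟨-α, Submodule.neg_mem _ hα, ψ - β,
        Submodule.sub_mem _ h'.1 (NN_anti hCB hβ), ?_⟩
      simp only [LinearMap.id_apply]
      rw [show φ = dL E ψ - (dL E ψ - φ) by abel, ← hh, map_sub]; abel
    · intro hx
      obtain ⟨α, hα, β, hβ, hh⟩ := mem_BB.1 hx
      have hh : α + dL E β = φ := hh
      have hZ : β ∈ ZZ k B C := by
        refine mem_ZZ.2 ⟨hβ, ?_⟩
        rw [show dL E β = φ - α by rw [← hh]; abel]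
        exact Submodule.sub_mem _ h.1 (NN_anti hBA hα)
      refine ⟨Submodule.Quotient.mk ⟨β, hZ⟩, ?_⟩
      rw [Hm_mk, mk_eq]
      refine mem_BB.2 ⟨-α, Submodule.neg_mem _ hα, 0, Submodule.zero_mem _, ?_⟩
      rw [← hh, map_zero]; abel

end AS


namespace AS

open scoped Uniformity

set_option linter.unusedSectionVars false

variable {E : Type} [UniformSpace E] {E' : Type} [UniformSpace E']

theorem BB_le_ZZ {k : ℕ} {A B : Set E} (h : B ⊆ A) : BB k A B ≤ ZZ k A B := by
  intro φ hφ
  obtain ⟨α, hα, β, hβ, rfl⟩ := mem_BB.1 hφ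
  refine mem_ZZ.2 ⟨Submodule.add_mem _ (NN_anti h hα) (dd_mem_NN hβ), ?_⟩
  rw [map_add, dL_dL, add_zero]
  exact dd_mem_NN hα

theorem NN_le_BB {k : ℕ} {A B : Set E} : NN (k + 1) A ≤ BB k A B := le_sup_left

/-- Pullback of cochains along an arbitrary map. -/
def pb {E E' : Type} (f : E → E') : (List E' → ZMod 2) →ₗ[ZMod 2] (List E → ZMod 2) where
  toFun φ := fun l => φ (l.map f)
  map_add' _ _ := rfl
  map_smul' _ _ := rfl

theorem pb_apply {E E' : Type} (f : E → E') (φ : List E' → ZMod 2) (l : List E) :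
    pb f φ l = φ (l.map f) := rfl

theorem pb_dL {E E' : Type} (f : E → E') (φ : List E' → ZMod 2) :
    dL E (pb f φ) = pb f (dL E' φ) := by
  funext l
  exact (dd_map f l φ).symm

/-- Uniform continuity on a set. -/
def UCO (f : E → E') (A : Set E) : Prop :=
  ∀ U ∈ 𝓤 E', ∃ V ∈ 𝓤 E, ∀ x ∈ A, ∀ y ∈ A, (x, y) ∈ V → (f x, f y) ∈ U

theorem UCO.mono {f : E → E'} {A B : Set E} (h : UCO f A) (hB : B ⊆ A) : UCO f B := by
  intro U hU
  obtain ⟨V, hV, hh⟩ := h U hU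
  exact ⟨V, hV, fun x hx y hy => hh x (hB hx) y (hB hy)⟩

theorem pb_NN {f : E → E'} {A : Set E} {A' : Set E'} (hf : UCO f A) (hA : Set.MapsTo f A A')
    {n : ℕ} {φ : List E' → ZMod 2} (h : φ ∈ NN n A') : pb f φ ∈ NN n A := by
  obtain ⟨U, hU, hh⟩ := h
  obtain ⟨V, hV, hVU⟩ := hf U hU
  refine ⟨V, hV, fun l hl => hh _ ⟨by simp [hl.1], ?_, ?_⟩⟩
  · intro x hx
    obtain ⟨a, ha, rfl⟩ := List.mem_map.1 hx
    exact hA (hl.2.1 a ha)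
  · intro x hx y hy
    obtain ⟨a, ha, rfl⟩ := List.mem_map.1 hx
    obtain ⟨b, hb, rfl⟩ := List.mem_map.1 hy
    exact hVU a (hl.2.1 a ha) b (hl.2.1 b hb) (hl.2.2 a ha b hb)

theorem pb_ZZ {f : E → E'} {A B : Set E} {A' B' : Set E'} (hf : UCO f A) (hBA : B ⊆ A)
    (hA : Set.MapsTo f A A') (hB : Set.MapsTo f B B') {k : ℕ} {φ : List E' → ZMod 2}
    (h : φ ∈ ZZ k A' B') : pb f φ ∈ ZZ k A B :=
  mem_ZZ.2 ⟨pb_NN (hf.mono hBA) hB h.1, by rw [pb_dL]; exact pb_NN hf hA h.2⟩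

theorem pb_BB {f : E → E'} {A B : Set E} {A' B' : Set E'} (hf : UCO f A) (hBA : B ⊆ A)
    (hA : Set.MapsTo f A A') (hB : Set.MapsTo f B B') {k : ℕ} {φ : List E' → ZMod 2}
    (h : φ ∈ BB k A' B') : pb f φ ∈ BB k A B := by
  obtain ⟨α, hα, β, hβ, rfl⟩ := mem_BB.1 h
  exact mem_BB.2 ⟨pb f α, pb_NN hf hA hα, pb f β, pb_NN (hf.mono hBA) hB hβ, by
    rw [map_add, pb_dL]⟩

theorem sub_mem_NN_of_eq {n : ℕ} {A : Set E} {φ ψ : List E → ZMod 2}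
    (h : ∀ l : List E, l.length = n → (∀ x ∈ l, x ∈ A) → φ l = ψ l) : φ - ψ ∈ NN n A :=
  ⟨Set.univ, Filter.univ_mem, fun l hl => by simp [h l hl.1 hl.2.1]⟩

theorem pb_comp_eq {f : E → E'} {g : E' → E} {A : Set E} (hgf : ∀ x ∈ A, g (f x) = x)
    (n : ℕ) (φ : List E → ZMod 2) : pb f (pb g φ) - φ ∈ NN n A := by
  apply sub_mem_NN_of_eq
  intro l _ hl
  rw [pb_apply, pb_apply, List.map_map]
  congr 1
  conv_rhs => rw [← List.map_id l]
  apply List.map_congr_left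
  intro x hx
  exact hgf x (hl x hx)

/-- Uniform isomorphisms of pairs induce isomorphisms. -/
theorem iso_HH {f : E → E'} {g : E' → E} {A B : Set E} {A' B' : Set E'}
    (hf : UCO f A) (hg : UCO g A') (hBA : B ⊆ A) (hBA' : B' ⊆ A')
    (hA : Set.MapsTo f A A') (hB : Set.MapsTo f B B')
    (hA' : Set.MapsTo g A' A) (hB' : Set.MapsTo g B' B)
    (hgf : ∀ x ∈ A, g (f x) = x) (hfg : ∀ x ∈ A', f (g x) = x) (k : ℕ) :
    Nonempty (HH k A' B' ≃ₗ[ZMod 2] HH k A B) := by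
  refine ⟨LinearEquiv.ofLinearMap
    (Hm (pb f) (fun φ h => pb_ZZ hf hBA hA hB h) (fun φ h => pb_BB hf hBA hA hB h))
    (Hm (pb g) (fun φ h => pb_ZZ hg hBA' hA' hB' h) (fun φ h => pb_BB hg hBA' hA' hB' h)) ?_ ?_⟩
  · refine LinearMap.ext fun x => ?_
    obtain ⟨φ, hφ, rfl⟩ := HH_ind x
    rw [LinearMap.comp_apply, Hm_mk, Hm_mk, LinearMap.id_apply, mk_eq]
    exact NN_le_BB (pb_comp_eq hgf _ _)
  · refine LinearMap.ext fun x => ?_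
    obtain ⟨φ, hφ, rfl⟩ := HH_ind x
    rw [LinearMap.comp_apply, Hm_mk, Hm_mk, LinearMap.id_apply, mk_eq]
    exact NN_le_BB (pb_comp_eq hfg _ _)

theorem step {k : ℕ} {A B : Set E} {A' B' : Set E'} {f g : E → E'} {φ : List E' → ZMod 2}
    {U : Set (E' × E')} {V : Set (E × E)}
    (hN : ∀ l, Sm U B' (k + 1) l → φ l = 0) (hZ : ∀ l, Sm U A' (k + 2) l → dd φ l = 0)
    (hV : V ∈ 𝓤 E) (hfA : Set.MapsTo f A A') (hgA : Set.MapsTo g A A')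
    (hfB : Set.MapsTo f B B') (hgB : Set.MapsTo g B B') (hBA : B ⊆ A)
    (h : ∀ x ∈ A, ∀ y ∈ A, (x, y) ∈ V →
      (f x, f y) ∈ U ∧ (f x, g y) ∈ U ∧ (g x, f y) ∈ U ∧ (g x, g y) ∈ U) :
    pb f φ - pb g φ ∈ BB k A B := by
  refine mem_BB.2 ⟨pr f g (dd φ), ⟨V, hV, ?_⟩, pr f g φ, ⟨V, hV, ?_⟩, ?_⟩
  · intro l hl
    apply pr_zero
    intro m hm hy
    refine hZ m ⟨by rw [hm, hl.1], ?_, ?_⟩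
    · intro x hx
      obtain ⟨a, ha, rfl | rfl⟩ := hy x hx
      · exact hfA (hl.2.1 a ha)
      · exact hgA (hl.2.1 a ha)
    · intro x hx y hy'
      obtain ⟨a, ha, haa⟩ := hy x hx
      obtain ⟨b, hb, hbb⟩ := hy y hy'
      have := h a (hl.2.1 a ha) b (hl.2.1 b hb) (hl.2.2 a ha b hb)
      rcases haa with rfl | rfl <;> rcases hbb with rfl | rfl <;> tauto
  · intro l hl
    apply pr_zero
    intro m hm hy
    refine hN m ⟨by rw [hm, hl.1], ?_, ?_⟩
    · intro x hx
      obtain ⟨a, ha, rfl | rfl⟩ := hy x hx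
      · exact hfB (hl.2.1 a ha)
      · exact hgB (hl.2.1 a ha)
    · intro x hx y hy'
      obtain ⟨a, ha, haa⟩ := hy x hx
      obtain ⟨b, hb, hbb⟩ := hy y hy'
      have := h a (hBA (hl.2.1 a ha)) b (hBA (hl.2.1 b hb)) (hl.2.2 a ha b hb)
      rcases haa with rfl | rfl <;> rcases hbb with rfl | rfl <;> tauto
  · funext l
    have := prism f g l φ
    simp only [Pi.add_apply, Pi.sub_apply, dL_apply, pb_apply]
    rw [CharTwo.sub_eq_add, ← this, add_comm]

/-- Uniform homotopies. -/
def UH (h : ℝ → E → E') (A : Set E) : Prop :=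
  ∀ U ∈ 𝓤 E', ∃ V ∈ 𝓤 E, ∃ δ > (0 : ℝ), ∀ x ∈ A, ∀ y ∈ A, ∀ s ∈ Set.Icc (0 : ℝ) 1,
    ∀ t ∈ Set.Icc (0 : ℝ) 1, (x, y) ∈ V → |s - t| < δ → (h s x, h t y) ∈ U

theorem homotopy {k : ℕ} {A B : Set E} {A' B' : Set E'} {h : ℝ → E → E'} (hh : UH h A)
    (hBA : B ⊆ A) (hA : ∀ t ∈ Set.Icc (0 : ℝ) 1, Set.MapsTo (h t) A A')
    (hB : ∀ t ∈ Set.Icc (0 : ℝ) 1, Set.MapsTo (h t) B B') {φ : List E' → ZMod 2}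
    (hφ : φ ∈ ZZ k A' B') : pb (h 0) φ - pb (h 1) φ ∈ BB k A B := by
  obtain ⟨⟨U, hU, h1⟩, ⟨U', hU', h2⟩⟩ := mem_ZZ.1 hφ
  obtain ⟨V, hV, δ, hδ, H⟩ := hh (U ∩ U') (Filter.inter_mem hU hU')
  obtain ⟨N, hN⟩ := exists_nat_gt (1 / δ)
  have hN0 : (0 : ℝ) < N := lt_trans (by positivity) hN
  have key : ∀ i : ℕ, i ≤ N → pb (h 0) φ - pb (h (i / N)) φ ∈ BB k A B := by
    intro i
    induction i with
    | zero => intro _; simp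
    | succ i ih =>
      intro hi
      have h3 := ih (by omega)
      have e1 : (i / N : ℝ) ∈ Set.Icc (0 : ℝ) 1 := by
        refine ⟨by positivity, (div_le_one hN0).2 ?_⟩
        exact_mod_cast (by omega : i ≤ N)
      have e2 : ((i + 1 : ℕ) / N : ℝ) ∈ Set.Icc (0 : ℝ) 1 := by
        refine ⟨by positivity, (div_le_one hN0).2 ?_⟩
        exact_mod_cast hi
      have e4 : (1 / N : ℝ) < δ := by
        rw [div_lt_iff₀ hN0]; rw [div_lt_iff₀ hδ] at hN; linarith
      have e3 : |(i / N : ℝ) - ((i + 1 : ℕ) / N : ℝ)| < δ := by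
        rw [show (i / N : ℝ) - ((i + 1 : ℕ) / N : ℝ) = - (1 / N) by push_cast; ring, abs_neg,
          abs_of_pos (by positivity)]
        exact e4
      have e5 : |((i + 1 : ℕ) / N : ℝ) - (i / N : ℝ)| < δ := by rw [abs_sub_comm]; exact e3
      have h4 : pb (h (i / N)) φ - pb (h ((i + 1 : ℕ) / N)) φ ∈ BB k A B := by
        refine step (U := U ∩ U') (V := V) (A' := A') (B' := B')
          (fun l hl => h1 l (hl.mono Set.inter_subset_left subset_rfl))
          (fun l hl => h2 l (hl.mono Set.inter_subset_right subset_rfl)) hV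
          (hA _ e1) (hA _ e2) (hB _ e1) (hB _ e2) hBA ?_
        intro x hx y hy hxy
        exact ⟨H x hx y hy _ e1 _ e1 hxy (by simpa using hδ), H x hx y hy _ e1 _ e2 hxy e3,
          H x hx y hy _ e2 _ e1 hxy e5, H x hx y hy _ e2 _ e2 hxy (by simpa using hδ)⟩
      have := Submodule.add_mem _ h3 h4
      simpa using this
  have := key N le_rfl
  rwa [div_self hN0.ne'] at this

/-- Finite dimensionality with prescribed dimension. -/
def Dim (k : ℕ) (A B : Set E) (d : ℕ) : Prop :=
  Module.Finite (ZMod 2) (HH k A B) ∧ Module.finrank (ZMod 2) (HH k A B) = d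

theorem Dim.of_equiv {k k' : ℕ} {A B : Set E} {A' B' : Set E'} {d : ℕ} (h : Dim k A B d)
    (e : HH k A B ≃ₗ[ZMod 2] HH k' A' B') : Dim k' A' B' d := by
  obtain ⟨h1, h2⟩ := h
  exact ⟨Module.Finite.equiv e, by rw [← e.finrank_eq, h2]⟩

theorem dim_zero_iff {k : ℕ} {A B : Set E} : Dim k A B 0 ↔ ZZ k A B ≤ BB k A B := by
  constructor
  · rintro ⟨h1, h2⟩ φ hφ
    have := Module.finrank_zero_iff.1 h2
    rw [← mk_eq_zero hφ]
    exact Subsingleton.elim _ _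
  · intro h
    have : Subsingleton (HH k A B) := by
      refine ⟨fun x y => ?_⟩
      obtain ⟨φ, hφ, rfl⟩ := HH_ind x
      obtain ⟨ψ, hψ, rfl⟩ := HH_ind y
      rw [mk_eq]
      exact h (Submodule.sub_mem _ hφ hψ)
    exact ⟨inferInstance, Module.finrank_zero_iff.2 this⟩

theorem dd_const {E : Type} (c : ZMod 2) (l : List E) :
    dd (fun _ => c) l = l.length * c := by
  induction l with
  | nil => simp [dd]
  | cons x l ih => simp only [dd, ih, List.length_cons]; push_cast; ring

theorem contractible {A : Set E} {h : ℝ → E → E} (hh : UH h A)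
    (hA : ∀ t ∈ Set.Icc (0 : ℝ) 1, Set.MapsTo (h t) A A) (h0 : ∀ x ∈ A, h 0 x = x)
    {c : E} (hc : c ∈ A) (h1 : ∀ x ∈ A, h 1 x = c) (k : ℕ) :
    Dim k A ∅ (if k = 0 then 1 else 0) := by
  have key : ∀ φ ∈ ZZ k A (∅ : Set E),
      φ - (fun _ => φ (List.replicate (k + 1) c)) ∈ BB k A (∅ : Set E) := by
    intro φ hφ
    have H := homotopy hh (Set.empty_subset A) hA (B' := ∅) (by simp) hφ
    have H1 : pb (h 0) φ - φ ∈ NN (k + 1) A := by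
      apply sub_mem_NN_of_eq
      intro l _ hl
      rw [pb_apply]
      congr 1
      conv_rhs => rw [← List.map_id l]
      apply List.map_congr_left
      intro x hx
      exact h0 x (hl x hx)
    have H2 : pb (h 1) φ - (fun _ => φ (List.replicate (k + 1) c)) ∈ NN (k + 1) A := by
      apply sub_mem_NN_of_eq
      intro l hlk hl
      rw [pb_apply]
      congr 1
      rw [List.eq_replicate_iff]
      refine ⟨by simp [hlk], ?_⟩
      intro b hb
      obtain ⟨a, ha, rfl⟩ := List.mem_map.1 hb
      exact h1 a (hl a ha)
    have := Submodule.add_mem _ (Submodule.sub_mem _ H (NN_le_BB H1)) (NN_le_BB H2)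
    convert this using 1
    abel
  have hrep : ∀ U ∈ 𝓤 E, ∀ n, Sm U A n (List.replicate n c) := by
    intro U hU n
    refine ⟨by simp, ?_, ?_⟩
    · intro x hx; rw [List.eq_of_mem_replicate hx]; exact hc
    · intro x hx y hy
      rw [List.eq_of_mem_replicate hx, List.eq_of_mem_replicate hy]
      exact refl_mem_uniformity hU
  have hcN : ∀ (n : ℕ) (a : ZMod 2), (fun _ => a) ∈ NN (n + 1) (∅ : Set E) := by
    intro n a
    refine ⟨Set.univ, Filter.univ_mem, ?_⟩
    intro l hl
    exfalso
    have h3 := hl.1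
    cases l with
    | nil => simp at h3
    | cons x l => exact hl.2.1 x (by simp)
  by_cases hk : k = 0
  · subst hk
    simp only [if_true]
    have hu : (fun _ => 1) ∈ ZZ 0 A (∅ : Set E) := by
      refine mem_ZZ.2 ⟨hcN _ _, ⟨Set.univ, Filter.univ_mem, ?_⟩⟩
      intro l hl
      rw [dL_apply, dd_const, hl.1]
      decide
    have hne : (Submodule.Quotient.mk ⟨_, hu⟩ : HH 0 A (∅ : Set E)) ≠ 0 := by
      intro hz
      rw [mk_eq_zero] at hz
      obtain ⟨α, ⟨U, hU, hα⟩, β, ⟨V, hV, hβ⟩, he⟩ := mem_BB.1 hz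
      have h2 := congrFun he [c]
      have h3 := hα [c] (hrep U hU 1)
      have h4 := hβ [] ⟨rfl, by simp, by simp⟩
      simp [h3, dd, h4] at h2
    have hsp : ∀ w : HH 0 A (∅ : Set E), ∃ a : ZMod 2,
        a • (Submodule.Quotient.mk ⟨_, hu⟩ : HH 0 A (∅ : Set E)) = w := by
      intro w
      obtain ⟨φ, hφ, rfl⟩ := HH_ind w
      refine ⟨φ (List.replicate 1 c), ?_⟩
      rw [← Submodule.Quotient.mk_smul]
      symm
      change (Submodule.Quotient.mk ⟨φ, hφ⟩ : HH 0 A (∅ : Set E)) =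
        Submodule.Quotient.mk ⟨φ (List.replicate 1 c) • (fun _ => 1), _⟩
      rw [mk_eq]
      convert key φ hφ using 2
      funext l
      simp
    have hf : Module.finrank (ZMod 2) (HH 0 A (∅ : Set E)) = 1 :=
      finrank_eq_one _ hne hsp
    exact ⟨Module.finite_of_finrank_eq_succ hf, hf⟩
  · rw [if_neg hk, dim_zero_iff]
    intro φ hφ
    obtain ⟨m, rfl⟩ := Nat.exists_eq_succ_of_ne_zero hk
    have H := key φ hφ
    set a := φ (List.replicate (m.succ + 1) c) with ha
    suffices hs : (fun _ => a) ∈ BB m.succ A (∅ : Set E) by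
      have := Submodule.add_mem _ H hs
      simpa using this
    rcases Nat.even_or_odd m with hm | hm
    · -- then the length `m + 3` is odd
      have hZ : (fun _ => a) ∈ ZZ m.succ A (∅ : Set E) := by
        have := Submodule.sub_mem _ hφ (BB_le_ZZ (Set.empty_subset A) H)
        simpa using this
      obtain ⟨U, hU, h5⟩ := hZ.2
      have h6 := h5 _ (hrep U hU (m.succ + 2))
      rw [dL_apply, dd_const, List.length_replicate] at h6
      have h7 : ((m.succ + 2 : ℕ) : ZMod 2) = 1 := by
        obtain ⟨r, rfl⟩ := hm
        rw [show (r + r).succ + 2 = 2 * (r + 1) + 1 by omega]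
        push_cast
        rw [show (2 : ZMod 2) = 0 by decide]; ring
      rw [h7, one_mul] at h6
      rw [h6]
      exact Submodule.zero_mem _
    · refine mem_BB.2 ⟨(fun _ => a) - dL E (fun _ => a), ?_, fun _ => a, hcN m a, by abel⟩
      refine sub_mem_NN_of_eq ?_
      intro l hl _
      rw [dL_apply, dd_const, hl]
      have h7 : ((m.succ + 1 : ℕ) : ZMod 2) = 1 := by
        obtain ⟨r, rfl⟩ := hm
        rw [show (2 * r + 1).succ + 1 = 2 * (r + 1) + 1 by omega]
        push_cast
        rw [show (2 : ZMod 2) = 0 by decide]; ring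
      rw [h7, one_mul]

end AS


namespace AS

open scoped Uniformity

set_option linter.unusedSectionVars false

variable {E : Type} [UniformSpace E] {E' : Type} [UniformSpace E']

/-- Uniformly excisive pairs of sets. -/
def UE (A B : Set E) : Prop :=
  ∀ U ∈ 𝓤 E, ∃ V ∈ 𝓤 E, ∀ x ∈ A, ∀ y ∈ B, (x, y) ∈ V → ∃ z ∈ A ∩ B, (x, z) ∈ U

theorem UE_of_compact [T2Space E] {A B : Set E} (hA : IsCompact A) (hB : IsCompact B) :
    UE A B := by
  intro U hU
  obtain ⟨W, ⟨hW, hWo, hWs⟩, hWU⟩ :=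
    (uniformity_hasBasis_open_symmetric (α := E)).mem_iff.1 hU
  have hO : IsOpen (⋃ z ∈ A ∩ B, {x | (x, z) ∈ W}) := by
    refine isOpen_biUnion fun z _ => ?_
    exact hWo.preimage (by fun_prop : Continuous fun x : E => (x, z))
  have hK : IsCompact (A \ ⋃ z ∈ A ∩ B, {x | (x, z) ∈ W}) := hA.diff hO
  have hd : Disjoint (A \ ⋃ z ∈ A ∩ B, {x | (x, z) ∈ W}) B := by
    rw [Set.disjoint_left]
    rintro x ⟨hxA, hx⟩ hxB
    exact hx (Set.mem_biUnion (show x ∈ A ∩ B from ⟨hxA, hxB⟩) (refl_mem_uniformity hW))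
  obtain ⟨V, hV, hVd⟩ := hd.exists_uniform_thickening hK hB.isClosed
  refine ⟨V, hV, ?_⟩
  intro x hx y hy hxy
  by_contra hcon
  push Not at hcon
  have hxK : x ∈ A \ ⋃ z ∈ A ∩ B, {x | (x, z) ∈ W} := by
    refine ⟨hx, ?_⟩
    intro hx'
    simp only [Set.mem_iUnion] at hx'
    obtain ⟨z, hz, hz'⟩ := hx'
    exact hcon z hz (hWU hz')
  refine (Set.disjoint_left.1 hVd : ∀ ⦃a⦄, _ → _) (a := y) ?_ ?_
  · exact Set.mem_biUnion hxK hxy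
  · exact Set.mem_biUnion hy (refl_mem_uniformity hV)

theorem exc_g {A B : Set E} (h : UE A B) (W : Set (E × E)) (hW : W ∈ 𝓤 E) :
    ∃ V ∈ 𝓤 E, V ⊆ W ∧ ∃ g : E → E, (∀ x ∈ B, g x = x) ∧
      ∀ l n, Sm V (A ∪ B) n l → ¬ (∀ x ∈ l, x ∈ A) →
        (∀ x ∈ l, g x ∈ B ∧ (x ∈ A → g x ∈ A)) ∧
        ∀ x ∈ l, ∀ y ∈ l, (x, y) ∈ W ∧ (x, g y) ∈ W ∧ (g x, y) ∈ W ∧ (g x, g y) ∈ W := by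
  classical
  obtain ⟨U1, hU1, hs1, hc1⟩ := comp_symm_mem_uniformity_sets hW
  obtain ⟨U, hU, hs, hc⟩ := comp_symm_mem_uniformity_sets hU1
  have hUU1 : U ⊆ U1 := fun p hp => hc ⟨p.2, hp, refl_mem_uniformity hU⟩
  have hU1W : U1 ⊆ W := fun p hp => hc1 ⟨p.2, hp, refl_mem_uniformity hU1⟩
  obtain ⟨V, hV, hVU⟩ := h U hU
  refine ⟨V ∩ U, Filter.inter_mem hV hU, fun p hp => hU1W (hUU1 hp.2),
    fun x => if x ∈ B then x else if hz : ∃ z ∈ A ∩ B, (x, z) ∈ U then hz.choose else x, ?_, ?_⟩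
  · intro x hx; simp [hx]
  set g : E → E :=
    fun x => if x ∈ B then x else if hz : ∃ z ∈ A ∩ B, (x, z) ∈ U then hz.choose else x with hg
  intro l n hl hnot
  push Not at hnot
  obtain ⟨y, hyl, hyA⟩ := hnot
  have hyB : y ∈ B := (hl.2.1 y hyl).resolve_left hyA
  have key : ∀ x ∈ l, (g x ∈ B ∧ (x ∈ A → g x ∈ A)) ∧ (x, g x) ∈ U := by
    intro x hx
    by_cases hxB : x ∈ B
    · have : g x = x := by simp [hg, hxB]
      rw [this]
      exact ⟨⟨hxB, id⟩, refl_mem_uniformity hU⟩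
    · have hxA : x ∈ A := (hl.2.1 x hx).resolve_right hxB
      have hz : ∃ z ∈ A ∩ B, (x, z) ∈ U := hVU x hxA y hyB (hl.2.2 x hx y hyl).1
      have : g x = hz.choose := by simp only [hg, if_neg hxB, dif_pos hz]
      rw [this]
      have := hz.choose_spec
      exact ⟨⟨this.1.2, fun _ => this.1.1⟩, this.2⟩
  refine ⟨fun x hx => (key x hx).1, ?_⟩
  intro x hx z hz
  have h1 : (x, z) ∈ U := (hl.2.2 x hx z hz).2
  have h2 := (key x hx).2
  have h3 := (key z hz).2
  have h2' : (g x, x) ∈ U := hs.symm _ _ h2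
  have h4 : (x, g z) ∈ U1 := hc ⟨z, h1, h3⟩
  have h5 : (g x, z) ∈ U1 := hc ⟨x, h2', h1⟩
  exact ⟨hU1W (hUU1 h1), hU1W h4, hU1W h5, hc1 ⟨x, hUU1 h2', h4⟩⟩

open Classical in
/-- Extension of a cochain on `B` by zero on `A`. -/
noncomputable def ex (A : Set E) (g : E → E) (φ : List E → ZMod 2) (l : List E) : ZMod 2 :=
  if ∀ x ∈ l, x ∈ A then 0 else φ (l.map g)

theorem ex_ext {A B : Set E} (h : UE A B) {n : ℕ} {φ : List E → ZMod 2} (hφ : φ ∈ NN n (A ∩ B)) :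
    ∃ ψ : List E → ZMod 2, ψ ∈ NN n A ∧ ψ - φ ∈ NN n B ∧
      (dL E φ ∈ NN (n + 1) B → dL E ψ ∈ NN (n + 1) (A ∪ B)) := by
  by_cases hd : dL E φ ∈ NN (n + 1) B
  swap
  · obtain ⟨W, hW, hWφ⟩ := hφ
    obtain ⟨V, hV, hVW, g, hgB, hg⟩ := exc_g h W hW
    refine ⟨ex A g φ, ⟨V, hV, fun l hl => if_pos hl.2.1⟩, ⟨V, hV, ?_⟩, fun h => absurd h hd⟩
    intro l hl
    simp only [Pi.sub_apply, ex]
    split_ifs with hA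
    · rw [hWφ l ⟨hl.1, fun x hx => ⟨hA x hx, hl.2.1 x hx⟩, fun x hx y hy => hVW (hl.2.2 x hx y hy)⟩]
      simp
    · rw [show l.map g = l from by
        conv_rhs => rw [← List.map_id l]
        exact List.map_congr_left fun x hx => hgB x (hl.2.1 x hx)]
      simp
  · obtain ⟨W1, hW1, hWφ1⟩ := hφ
    obtain ⟨W2, hW2, hWφ2⟩ := hd
    obtain ⟨V, hV, hVW, g, hgB, hg⟩ := exc_g h (W1 ∩ W2) (Filter.inter_mem hW1 hW2)
    refine ⟨ex A g φ, ⟨V, hV, fun l hl => if_pos hl.2.1⟩, ⟨V, hV, ?_⟩, fun _ => ⟨V, hV, ?_⟩⟩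
    · intro l hl
      simp only [Pi.sub_apply, ex]
      split_ifs with hA
      · rw [hWφ1 l ⟨hl.1, fun x hx => ⟨hA x hx, hl.2.1 x hx⟩,
          fun x hx y hy => (hVW (hl.2.2 x hx y hy)).1⟩]
        simp
      · rw [show l.map g = l from by
          conv_rhs => rw [← List.map_id l]
          exact List.map_congr_left fun x hx => hgB x (hl.2.1 x hx)]
        simp
    · intro l hl
      rw [dL_apply]
      by_cases hA : ∀ x ∈ l, x ∈ A
      · apply dd_zero
        intro m hm _
        exact if_pos fun x hx => hA x (hm.subset hx)
      · obtain ⟨hg1, hg2⟩ := hg l _ hl hA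
        rw [dd_congr l (ex A g φ) (fun m => φ (m.map g)), ← dd_map]
        · refine hWφ2 _ ⟨by simp [hl.1], ?_, ?_⟩
          · intro x hx
            obtain ⟨a, ha, rfl⟩ := List.mem_map.1 hx
            exact (hg1 a ha).1
          · intro x hx y hy
            obtain ⟨a, ha, rfl⟩ := List.mem_map.1 hx
            obtain ⟨b, hb, rfl⟩ := List.mem_map.1 hy
            exact (hg2 a ha b hb).2.2.2.2
        · intro m hm hml
          simp only [ex]
          split_ifs with hmA
          · symm
            refine hWφ1 _ ⟨by have := hl.1; rw [List.length_map]; omega, ?_, ?_⟩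
            · intro x hx
              obtain ⟨a, ha, rfl⟩ := List.mem_map.1 hx
              exact ⟨(hg1 a (hm.subset ha)).2 (hmA a ha), (hg1 a (hm.subset ha)).1⟩
            · intro x hx y hy
              obtain ⟨a, ha, rfl⟩ := List.mem_map.1 hx
              obtain ⟨b, hb, rfl⟩ := List.mem_map.1 hy
              exact (hg2 a (hm.subset ha) b (hm.subset hb)).2.2.2.1
          · rfl

theorem ex_inj {A B : Set E} (h : UE A B) {k : ℕ} {φ : List E → ZMod 2}
    (hA : φ ∈ NN (k + 1) A) (hB : φ ∈ NN (k + 1) B) (hd : dL E φ ∈ NN (k + 2) (A ∪ B)) :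
    φ ∈ BB k (A ∪ B) A := by
  classical
  obtain ⟨W1, hW1, h1⟩ := hA
  obtain ⟨W2, hW2, h2⟩ := hB
  obtain ⟨W3, hW3, h3⟩ := hd
  obtain ⟨V, hV, hVW, g, hgB, hg⟩ := exc_g h (W1 ∩ (W2 ∩ W3))
    (Filter.inter_mem hW1 (Filter.inter_mem hW2 hW3))
  set η : List E → ZMod 2 := fun l => if ∀ x ∈ l, x ∈ A then 0 else pr id g φ l with hη
  refine mem_BB.2 ⟨φ - dL E η, ⟨V, hV, ?_⟩, η, ⟨V, hV, fun l hl => if_pos hl.2.1⟩, by abel⟩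
  intro l hl
  simp only [Pi.sub_apply, dL_apply]
  by_cases hlA : ∀ x ∈ l, x ∈ A
  · rw [h1 l (Sm.mono ⟨hl.1, hlA, hl.2.2⟩ (hVW.trans Set.inter_subset_left) subset_rfl),
      dd_zero, sub_zero]
    intro m hm _
    exact if_pos fun x hx => hlA x (hm.subset hx)
  · obtain ⟨hg1, hg2⟩ := hg l _ hl hlA
    have hgl : φ (l.map g) = 0 := by
      refine h2 _ ⟨by simp [hl.1], ?_, ?_⟩
      · intro x hx
        obtain ⟨a, ha, rfl⟩ := List.mem_map.1 hx
        exact (hg1 a ha).1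
      · intro x hx y hy
        obtain ⟨a, ha, rfl⟩ := List.mem_map.1 hx
        obtain ⟨b, hb, rfl⟩ := List.mem_map.1 hy
        exact (hg2 a ha b hb).2.2.2.2.1
    have hprd : pr id g (dd φ) l = 0 := by
      apply pr_zero
      intro m hm hmm
      refine h3 m ⟨by rw [hm, hl.1], ?_, ?_⟩
      · intro x hx
        obtain ⟨a, ha, haa⟩ := hmm x hx
        rcases haa with h' | h' <;> rw [h']
        · exact hl.2.1 a ha
        · exact Or.inr (hg1 a ha).1
      · intro x hx y hy
        obtain ⟨a, ha, haa⟩ := hmm x hx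
        obtain ⟨b, hb, hbb⟩ := hmm y hy
        obtain ⟨q1, q2, q3, q4⟩ := hg2 a ha b hb
        rcases haa with rfl | rfl <;> rcases hbb with rfl | rfl
        · exact q1.2.2
        · exact q2.2.2
        · exact q3.2.2
        · exact q4.2.2
    have hdd : dd η l = dd (pr id g φ) l := by
      apply dd_congr
      intro m hm hml
      simp only [hη]
      split_ifs with hmA
      · symm
        apply pr_zero
        intro m' hm' hmm
        refine h1 m' ⟨by have := hl.1; omega, ?_, ?_⟩
        · intro x hx
          obtain ⟨a, ha, haa⟩ := hmm x hx
          rcases haa with h' | h' <;> rw [h']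
          · exact hmA a ha
          · exact (hg1 a (hm.subset ha)).2 (hmA a ha)
        · intro x hx y hy
          obtain ⟨a, ha, haa⟩ := hmm x hx
          obtain ⟨b, hb, hbb⟩ := hmm y hy
          obtain ⟨q1, q2, q3, q4⟩ := hg2 a (hm.subset ha) b (hm.subset hb)
          rcases haa with rfl | rfl <;> rcases hbb with rfl | rfl
          · exact q1.1
          · exact q2.1
          · exact q3.1
          · exact q4.1
      · rfl
    have hp := prism id g l φ
    rw [hprd, hgl, add_zero, add_zero, List.map_id] at hp
    rw [hdd, hp, sub_self]

theorem excision {A B : Set E} (h : UE A B) (k : ℕ) :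
    Nonempty (HH k (A ∪ B) A ≃ₗ[ZMod 2] HH k B (A ∩ B)) := by
  have hZ : ∀ φ ∈ ZZ k (A ∪ B) A, LinearMap.id (R := ZMod 2) φ ∈ ZZ k B (A ∩ B) := fun φ h =>
    ⟨NN_anti Set.inter_subset_left h.1, NN_anti Set.subset_union_right h.2⟩
  have hB : ∀ φ ∈ BB k (A ∪ B) A, LinearMap.id (R := ZMod 2) φ ∈ BB k B (A ∩ B) := by
    intro φ h
    obtain ⟨α, hα, β, hβ, rfl⟩ := mem_BB.1 h
    exact mem_BB.2 ⟨α, NN_anti Set.subset_union_right hα, β,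
      NN_anti Set.inter_subset_left hβ, rfl⟩
  refine ⟨LinearEquiv.ofBijective (Hm _ hZ hB) ⟨?_, ?_⟩⟩
  · rw [← LinearMap.ker_eq_bot, LinearMap.ker_eq_bot']
    intro x hx
    obtain ⟨φ, hφ, rfl⟩ := HH_ind x
    rw [Hm_mk, mk_eq_zero] at hx
    rw [mk_eq_zero]
    obtain ⟨α, hα, β, hβ, he⟩ := mem_BB.1 hx
    have he : α + dL E β = φ := he
    obtain ⟨β', h1, h2, -⟩ := ex_ext h hβ
    have hmain : φ - dL E β' ∈ BB k (A ∪ B) A := by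
      apply ex_inj h
      · exact Submodule.sub_mem _ hφ.1 (dd_mem_NN h1)
      · have := Submodule.sub_mem _ hα (dd_mem_NN h2)
        rw [map_sub] at this
        convert this using 1
        rw [← he]; abel
      · rw [map_sub, dL_dL, sub_zero]; exact hφ.2
    have h3 : dL E β' ∈ BB k (A ∪ B) A :=
      mem_BB.2 ⟨0, Submodule.zero_mem _, β', h1, by simp⟩
    have := Submodule.add_mem _ hmain h3
    simpa using this
  · intro x
    obtain ⟨φ, hφ, rfl⟩ := HH_ind x
    obtain ⟨ψ, h1, h2, h3⟩ := ex_ext h hφ.1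
    refine ⟨Submodule.Quotient.mk ⟨ψ, mem_ZZ.2 ⟨h1, h3 hφ.2⟩⟩, ?_⟩
    rw [Hm_mk, mk_eq]
    exact NN_le_BB h2

/-- The pair has finite cohomology with Euler characteristic `c`. -/
def Eul (A B : Set E) (c : ℤ) : Prop :=
  (∀ k, Module.Finite (ZMod 2) (HH k A B)) ∧ ∃ N0, ∀ N ≥ N0,
    Module.finrank (ZMod 2) (HH N A B) = 0 ∧
    ∑ k ∈ Finset.range N, (-1 : ℤ) ^ k * Module.finrank (ZMod 2) (HH k A B) = c

theorem Eul.unique {A B : Set E} {a b : ℤ} (ha : Eul A B a) (hb : Eul A B b) : a = b := by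
  obtain ⟨_, N, hN⟩ := ha
  obtain ⟨_, M, hM⟩ := hb
  rw [← (hN (max N M) (le_max_left _ _)).2, ← (hM (max N M) (le_max_right _ _)).2]

theorem Eul.of_dim {A B : Set E} {n : ℕ} (h : ∀ k, Dim k A B (if k = n then 1 else 0)) :
    Eul A B ((-1) ^ n) := by
  refine ⟨fun k => (h k).1, n + 1, fun N hN => ⟨?_, ?_⟩⟩
  · rw [(h N).2, if_neg (by omega)]
  · rw [Finset.sum_eq_single_of_mem n (by simp; omega)]
    · rw [(h n).2]; simp
    · intro b _ hb
      rw [(h b).2, if_neg hb]; simp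

theorem Eul.add {A B C : Set E} (hBA : B ⊆ A) (hCB : C ⊆ B) {a b : ℤ} (ha : Eul A B a)
    (hb : Eul B C b) : Eul A C (a + b) := by
  obtain ⟨fa, N, hN⟩ := ha
  obtain ⟨fb, M, hM⟩ := hb
  obtain ⟨i, r, δ, hi, hir, hrδ, hδi⟩ := exists_les hBA hCB
  have fac : ∀ k, Module.Finite (ZMod 2) (HH k A C) := by
    intro k
    have : Module.Finite (ZMod 2) (LinearMap.ker (r k)) := by
      rw [← hir k]; infer_instance
    have : Module.Finite (ZMod 2) (HH k A C ⧸ LinearMap.ker (r k)) :=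
      Module.Finite.equiv (LinearMap.quotKerEquivRange (r k)).symm
    exact Module.Finite.of_submodule_quotient (LinearMap.ker (r k))
  have e1 : ∀ k, Module.finrank (ZMod 2) (HH k A C) =
      Module.finrank (ZMod 2) (LinearMap.range (r k)) +
      Module.finrank (ZMod 2) (LinearMap.range (i k)) := by
    intro k; rw [hir k, LinearMap.finrank_range_add_finrank_ker]
  have e2 : ∀ k, Module.finrank (ZMod 2) (HH k B C) =
      Module.finrank (ZMod 2) (LinearMap.range (δ k)) +
      Module.finrank (ZMod 2) (LinearMap.range (r k)) := by
    intro k; rw [hrδ k, LinearMap.finrank_range_add_finrank_ker]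
  have e3 : ∀ k, Module.finrank (ZMod 2) (HH (k + 1) A B) =
      Module.finrank (ZMod 2) (LinearMap.range (i (k + 1))) +
      Module.finrank (ZMod 2) (LinearMap.range (δ k)) := by
    intro k; rw [hδi k, LinearMap.finrank_range_add_finrank_ker]
  have e4 : Module.finrank (ZMod 2) (HH 0 A B) =
      Module.finrank (ZMod 2) (LinearMap.range (i 0)) := by
    rw [LinearMap.finrank_range_of_inj hi]
  refine ⟨fac, N + M, fun K hK => ⟨?_, ?_⟩⟩
  · have h1 := (hN K (by omega)).1
    have h2 := (hM K (by omega)).1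
    have h3 : Module.finrank (ZMod 2) (LinearMap.range (i K)) ≤
      Module.finrank (ZMod 2) (HH K A B) := LinearMap.finrank_range_le _
    have := e1 K
    have := e2 K
    omega
  · have key : ∀ n, ∑ k ∈ Finset.range (n + 1),
        (-1 : ℤ) ^ k * Module.finrank (ZMod 2) (HH k A C) =
        ∑ k ∈ Finset.range (n + 1), (-1 : ℤ) ^ k * Module.finrank (ZMod 2) (HH k A B) +
        ∑ k ∈ Finset.range (n + 1), (-1 : ℤ) ^ k * Module.finrank (ZMod 2) (HH k B C) -
        (-1) ^ n * Module.finrank (ZMod 2) (LinearMap.range (δ n)) := by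
      intro n
      induction n with
      | zero => simp [e1, e2, e4]; ring
      | succ n ih =>
        rw [Finset.sum_range_succ, ih, Finset.sum_range_succ _ (n + 1),
          Finset.sum_range_succ _ (n + 1), e1, e2 (n + 1), e3]
        push_cast
        ring
    have h2 := (hM K (by omega)).1
    have h4 := e2 K
    have h5 : Module.finrank (ZMod 2) (LinearMap.range (δ K)) = 0 := by omega
    have h6 := key K
    rw [h5, Finset.sum_range_succ, Finset.sum_range_succ, Finset.sum_range_succ,
      (hN K (by omega)).2, (hM K (by omega)).2, (hM K (by omega)).1, (hN K (by omega)).1] at h6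
    have h7 : Module.finrank (ZMod 2) (HH K A C) = 0 := by
      have h1 := (hN K (by omega)).1
      have h3 : Module.finrank (ZMod 2) (LinearMap.range (i K)) ≤
        Module.finrank (ZMod 2) (HH K A B) := LinearMap.finrank_range_le _
      have := e1 K
      omega
    rw [h7] at h6
    simpa using h6

/-- Degree shift. -/
theorem dim_shift {A B C : Set E} (hBA : B ⊆ A) (hCB : C ⊆ B) (h0 : ∀ k, Dim k A C 0) {n : ℕ}
    (h : ∀ k, Dim k B C (if k = n then 1 else 0)) (k : ℕ) :
    Dim k A B (if k = n + 1 then 1 else 0) := by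
  obtain ⟨i, r, δ, hi, hir, hrδ, hδi⟩ := exists_les hBA hCB
  have hs : ∀ k, Subsingleton (HH k A C) := fun k => by
    have := (h0 k).1
    exact Module.finrank_zero_iff.1 (h0 k).2
  cases k with
  | zero =>
    have : Subsingleton (HH 0 A B) := hi.subsingleton
    exact ⟨inferInstance, by simpa using Module.finrank_zero_iff.2 this⟩
  | succ k =>
    have hb : Function.Bijective (δ k) := by
      constructor
      · rw [← LinearMap.ker_eq_bot, ← hrδ k, eq_bot_iff]
        rintro _ ⟨y, rfl⟩
        rw [Subsingleton.elim y 0, map_zero]; exact Submodule.zero_mem _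
      · rw [← LinearMap.range_eq_top, hδi k, eq_top_iff]
        intro x _
        exact Subsingleton.elim _ _
    have := (h k).of_equiv (LinearEquiv.ofBijective (δ k) hb)
    simpa using this

end AS


namespace AS

open scoped Uniformity
open Metric

set_option linter.unusedSectionVars false

variable {E : Type} [UniformSpace E] {E' : Type} [UniformSpace E']

theorem UCO_of_cont {f : E → E'} {A : Set E} (hA : IsCompact A) (hf : ContinuousOn f A) :
    UCO f A := by
  have h := hA.uniformContinuousOn_of_continuous hf
  intro U hU
  have h2 := h hU
  rw [Filter.mem_map, Filter.mem_inf_principal] at h2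
  exact ⟨_, h2, fun x hx y hy hxy => hxy ⟨hx, hy⟩⟩

theorem UH_of_cont {h : ℝ → E → E'} {A : Set E} (hA : IsCompact A)
    (hf : ContinuousOn (fun p : ℝ × E => h p.1 p.2) (Set.Icc (0 : ℝ) 1 ×ˢ A)) : UH h A := by
  have h' := (isCompact_Icc.prod hA).uniformContinuousOn_of_continuous hf
  intro U hU
  have h2 := h' hU
  rw [Filter.mem_map, Filter.mem_inf_principal] at h2
  rw [uniformity_prod_eq_comap_prod, Filter.mem_comap] at h2
  obtain ⟨T, hT, hTs⟩ := h2
  obtain ⟨T1, hT1, T2, hT2, hTT⟩ := Filter.mem_prod_iff.1 hT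
  obtain ⟨δ, hδ, hd⟩ := Metric.mem_uniformity_dist.1 hT1
  refine ⟨T2, hT2, δ, hδ, ?_⟩
  intro x hx y hy s hs t ht hxy hst
  exact @hTs ((s, x), (t, y)) (hTT ⟨hd hst, hxy⟩) ⟨⟨hs, hx⟩, ⟨ht, hy⟩⟩

theorem deform {A B : Set E} {h : ℝ → E → E} (hh : UH h A) (hBA : B ⊆ A)
    (hA : ∀ t ∈ Set.Icc (0 : ℝ) 1, Set.MapsTo (h t) A A)
    (hB : ∀ t ∈ Set.Icc (0 : ℝ) 1, Set.MapsTo (h t) B B) (h0 : ∀ x ∈ A, h 0 x = x)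
    (h1 : ∀ x ∈ A, h 1 x ∈ B) (k : ℕ) : Dim k A B 0 := by
  rw [dim_zero_iff]
  intro φ hφ
  have H := homotopy hh hBA hA hB hφ
  have H1 : pb (h 0) φ - φ ∈ NN (k + 1) A := by
    apply sub_mem_NN_of_eq
    intro l _ hl
    rw [pb_apply]
    congr 1
    conv_rhs => rw [← List.map_id l]
    apply List.map_congr_left
    intro x hx
    exact h0 x (hl x hx)
  have hu : UCO (h 1) A := by
    intro U hU
    obtain ⟨V, hV, δ, hδ, hd⟩ := hh U hU
    exact ⟨V, hV, fun x hx y hy hxy => hd x hx y hy 1 (by simp) 1 (by simp) hxy (by simpa)⟩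
  have H2 : pb (h 1) φ ∈ NN (k + 1) A := pb_NN hu (fun x hx => h1 x hx) hφ.1
  have := Submodule.add_mem _ (Submodule.sub_mem _ H (NN_le_BB H1)) (NN_le_BB H2)
  convert this using 1
  abel

/-- Euclidean space. -/
abbrev EB (n : ℕ) : Type := EuclideanSpace ℝ (Fin n)

/-- Dropping the first coordinate. -/
noncomputable def pp {n : ℕ} (x : EB (n + 1)) : EB n := WithLp.toLp 2 fun i => x i.succ

/-- Adding a first coordinate. -/
noncomputable def qq {n : ℕ} (s : ℝ) (y : EB n) : EB (n + 1) :=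
  WithLp.toLp 2 (Fin.cons s fun i => y i)

theorem qq_zero {n : ℕ} (s : ℝ) (y : EB n) : qq s y 0 = s := rfl

theorem pp_qq {n : ℕ} (s : ℝ) (y : EB n) : pp (qq s y) = y := by
  ext i; simp [pp, qq]

theorem qq_pp {n : ℕ} (x : EB (n + 1)) : qq (x 0) (pp x) = x := by
  ext i
  refine Fin.cases ?_ (fun i => ?_) i <;> simp [pp, qq]

theorem norm_pp {n : ℕ} (x : EB (n + 1)) : ‖x‖ ^ 2 = x 0 ^ 2 + ‖pp x‖ ^ 2 := by
  rw [EuclideanSpace.norm_sq_eq, EuclideanSpace.norm_sq_eq, Fin.sum_univ_succ]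
  simp [pp]

theorem norm_qq {n : ℕ} (s : ℝ) (y : EB n) : ‖qq s y‖ ^ 2 = s ^ 2 + ‖y‖ ^ 2 := by
  rw [norm_pp, pp_qq, qq_zero]

@[fun_prop]
theorem cont_pp {n : ℕ} : Continuous (pp (n := n)) := by
  unfold pp
  fun_prop

@[fun_prop]
theorem cont_qq {n : ℕ} {Y : Type*} [TopologicalSpace Y] {s : Y → ℝ} {y : Y → EB n}
    (hs : Continuous s) (hy : Continuous y) : Continuous fun a => qq (s a) (y a) := by
  unfold qq
  refine (PiLp.continuous_toLp 2 _).comp ?_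
  refine continuous_pi fun i => ?_
  refine Fin.cases ?_ (fun i => ?_) i
  · simpa using hs
  · simp only [Fin.cons_succ]; fun_prop

theorem mem_ball_iff {n : ℕ} (x : EB n) : x ∈ closedBall (0 : EB n) 1 ↔ ‖x‖ ^ 2 ≤ 1 := by
  rw [mem_closedBall_zero_iff, sq_le_one_iff₀ (norm_nonneg _)]

theorem mem_sphere_iff {n : ℕ} (x : EB n) : x ∈ sphere (0 : EB n) 1 ↔ ‖x‖ ^ 2 = 1 := by
  rw [mem_sphere_zero_iff_norm, pow_eq_one_iff_of_nonneg (norm_nonneg _) two_ne_zero]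

theorem ball_dim (n : ℕ) : ∀ k, Dim k (closedBall (0 : EB n) 1) (sphere (0 : EB n) 1)
    (if k = n then 1 else 0) := by
  induction n with
  | zero =>
    intro k
    have h1 : sphere (0 : EB 0) 1 = ∅ := by
      ext x
      rw [Subsingleton.elim x 0]; simp
    rw [h1]
    refine contractible (h := fun _ _ => 0) (c := 0) ?_ ?_ ?_ ?_ ?_ k
    · exact UH_of_cont (isCompact_closedBall _ _) continuousOn_const
    · intro t _ x _; simp
    · intro x _; exact Subsingleton.elim _ _
    · simp
    · intro x _; rfl
  | succ n ih =>
    set S := sphere (0 : EB (n + 1)) 1 with hS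
    set A := closedBall (0 : EB (n + 1)) 1 with hA
    set L := S ∩ {x | x 0 ≤ 0} with hL
    set R := S ∩ {x | 0 ≤ x 0} with hR
    have hc0 : Continuous fun x : EB (n + 1) => x 0 := by fun_prop
    have hLc : IsCompact L := (isCompact_sphere _ _).inter_right
      (isClosed_le hc0 continuous_const)
    have hRc : IsCompact R := (isCompact_sphere _ _).inter_right
      (isClosed_le continuous_const hc0)
    have hLR : L ∪ R = S := by
      ext x
      simp only [hL, hR, Set.mem_union, Set.mem_inter_iff, Set.mem_ofPred_eq]
      have := le_total (x 0) 0
      tauto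
    have hAc : IsCompact A := isCompact_closedBall _ _
    have hSA : S ⊆ A := sphere_subset_closedBall
    have hLS : L ⊆ S := Set.inter_subset_left
    have hAL : ∀ k, Dim k A L 0 := by
      have hcont : Continuous fun p : ℝ × EB (n + 1) =>
          qq ((1 - p.1) * p.2 0 - p.1 * Real.sqrt (1 - ‖pp p.2‖ ^ 2)) (pp p.2) := by
        fun_prop
      have hq : ∀ x ∈ A, Real.sqrt (1 - ‖pp x‖ ^ 2) ^ 2 = 1 - ‖pp x‖ ^ 2 ∧ x 0 ^ 2 ≤
          1 - ‖pp x‖ ^ 2 := by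
        intro x hx
        have h1 := (mem_ball_iff x).1 hx
        rw [norm_pp] at h1
        refine ⟨Real.sq_sqrt ?_, by linarith⟩
        nlinarith [sq_nonneg (x 0)]
      have hLfix : ∀ t, ∀ x ∈ L,
          qq ((1 - t) * x 0 - t * Real.sqrt (1 - ‖pp x‖ ^ 2)) (pp x) = x := by
        intro t x hx
        have h1 := (mem_sphere_iff x).1 hx.1
        rw [norm_pp] at h1
        have h2 : Real.sqrt (1 - ‖pp x‖ ^ 2) = - x 0 := by
          rw [show 1 - ‖pp x‖ ^ 2 = (- x 0) ^ 2 by linarith, Real.sqrt_sq]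
          have : x 0 ≤ 0 := hx.2
          linarith
        rw [h2, show (1 - t) * x 0 - t * -x 0 = x 0 by ring, qq_pp]
      refine deform (h := fun t x =>
        qq ((1 - t) * x 0 - t * Real.sqrt (1 - ‖pp x‖ ^ 2)) (pp x))
        (UH_of_cont hAc hcont.continuousOn) (hLS.trans hSA) ?_ ?_ ?_ ?_
      · intro t ht x hx
        obtain ⟨h1, h2⟩ := hq x hx
        rw [mem_ball_iff, norm_qq]
        set w := Real.sqrt (1 - ‖pp x‖ ^ 2)
        have hw : 0 ≤ w := Real.sqrt_nonneg _
        have h3 : |x 0| ≤ w := abs_le_of_sq_le_sq (by linarith) hw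
        have h4 : |(1 - t) * x 0 - t * w| ≤ w := by
          obtain ⟨h5, h6⟩ := abs_le.1 h3
          obtain ⟨h7, h8⟩ := ht
          rw [abs_le]
          constructor <;> nlinarith
        have h5 := sq_le_sq' (abs_le.1 h4).1 (abs_le.1 h4).2
        linarith
      · intro t _ x hx
        simp only
        rw [hLfix t x hx]; exact hx
      · intro x _
        simp [qq_pp]
      · intro x hx
        obtain ⟨h1, h2⟩ := hq x hx
        refine ⟨?_, ?_⟩
        · rw [hS, mem_sphere_iff, norm_qq]
          ring_nf
          rw [h1]; ring
        · rw [Set.mem_ofPred_eq, qq_zero]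
          have := Real.sqrt_nonneg (1 - ‖pp x‖ ^ 2)
          linarith
    refine dim_shift hSA hLS hAL ?_
    intro k
    obtain ⟨e⟩ := excision (UE_of_compact hLc hRc) k
    rw [← hLR]
    have hcg : Continuous fun y : EB n => qq (Real.sqrt (1 - ‖y‖ ^ 2)) y := by fun_prop
    obtain ⟨e'⟩ := iso_HH (f := pp) (g := fun y : EB n => qq (Real.sqrt (1 - ‖y‖ ^ 2)) y)
      (A := R) (B := L ∩ R) (A' := closedBall (0 : EB n) 1) (B' := sphere (0 : EB n) 1)
      (UCO_of_cont hRc cont_pp.continuousOn)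
      (UCO_of_cont (isCompact_closedBall _ _) hcg.continuousOn) Set.inter_subset_right
      sphere_subset_closedBall
      (by
        intro x hx
        have h1 := (mem_sphere_iff x).1 hx.1
        rw [norm_pp] at h1
        rw [mem_ball_iff]
        nlinarith [sq_nonneg (x 0)])
      (by
        intro x hx
        have h1 := (mem_sphere_iff x).1 hx.1.1
        rw [norm_pp] at h1
        have h2 : x 0 = 0 := le_antisymm hx.1.2 hx.2.2
        rw [mem_sphere_iff]
        rw [h2] at h1
        linarith)
      (by
        intro y hy
        rw [mem_ball_iff] at hy
        refine ⟨?_, ?_⟩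
        · rw [hS, mem_sphere_iff, norm_qq, Real.sq_sqrt (by linarith)]; ring
        · rw [Set.mem_ofPred_eq, qq_zero]; exact Real.sqrt_nonneg _)
      (by
        intro y hy
        rw [mem_sphere_iff] at hy
        have h0 : Real.sqrt (1 - ‖y‖ ^ 2) = 0 := by rw [hy]; simp
        have h1 : qq 0 y ∈ S := by
          rw [hS, mem_sphere_iff, norm_qq, hy]; ring
        beta_reduce; rw [h0]
        exact ⟨⟨h1, le_of_eq (qq_zero 0 y)⟩, ⟨h1, le_of_eq (qq_zero 0 y).symm⟩⟩)
      (by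
        intro x hx
        have h1 := (mem_sphere_iff x).1 hx.1
        rw [norm_pp] at h1
        rw [show 1 - ‖pp x‖ ^ 2 = x 0 ^ 2 by linarith, Real.sqrt_sq hx.2, qq_pp])
      (fun y _ => pp_qq _ _) k
    exact (ih k).of_equiv (e'.trans e.symm)

theorem no_retraction {n : ℕ} {r : EB n → EB n} (hr : ContinuousOn r (closedBall 0 1))
    (h1 : ∀ x ∈ closedBall (0 : EB n) 1, r x ∈ sphere (0 : EB n) 1)
    (h2 : ∀ x ∈ sphere (0 : EB n) 1, r x = x) : False := by
  have hd : Dim n (closedBall (0 : EB n) 1) (sphere (0 : EB n) 1) 0 := by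
    refine deform (h := fun t x => (1 - t) • x + t • r x) (UH_of_cont (isCompact_closedBall _ _) ?_)
      sphere_subset_closedBall ?_ ?_ ?_ ?_ n
    · have : ContinuousOn (fun p : ℝ × EB n => r p.2) (Set.Icc 0 1 ×ˢ closedBall 0 1) :=
        hr.comp continuousOn_snd fun p hp => hp.2
      exact ((continuousOn_const.sub continuousOn_fst).smul continuousOn_snd).add
        (continuousOn_fst.smul this)
    · intro t ht x hx
      exact convex_closedBall _ _ hx (sphere_subset_closedBall (h1 x hx)) (by linarith [ht.2])
        ht.1 (by ring)
    · intro t ht x hx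
      simp only
      rw [h2 x hx, ← add_smul]
      simpa using hx
    · intro x _; simp
    · intro x hx; simpa using h1 x hx
  have := ball_dim n n
  rw [if_pos rfl] at this
  have h3 := this.2
  rw [hd.2] at h3
  omega

theorem brouwer {n : ℕ} {f : EB n → EB n} (hf : ContinuousOn f (closedBall 0 1))
    (h1 : ∀ x ∈ closedBall (0 : EB n) 1, f x ∈ closedBall (0 : EB n) 1) :
    ∃ x ∈ closedBall (0 : EB n) 1, f x = x := by
  by_contra hcon
  push Not at hcon
  let u : EB n → EB n := fun x => x - f x
  let b : EB n → ℝ := fun x => inner ℝ x (u x)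
  let c : EB n → ℝ := fun x => ‖u x‖ ^ 2
  let lam : EB n → ℝ := fun x =>
    (- b x + Real.sqrt (b x ^ 2 + c x * (1 - ‖x‖ ^ 2))) / c x
  have hu : ∀ x ∈ closedBall (0 : EB n) 1, 0 < c x := by
    intro x hx
    have : u x ≠ 0 := fun h => hcon x hx (sub_eq_zero.1 h).symm
    have := norm_pos_iff.2 this
    positivity
  have huc : ContinuousOn u (closedBall 0 1) := continuousOn_id.sub hf
  have hbc : ContinuousOn b (closedBall 0 1) := continuousOn_id.inner huc
  have hcc : ContinuousOn c (closedBall 0 1) := huc.norm.pow 2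
  have hlc : ContinuousOn lam (closedBall 0 1) := by
    refine ContinuousOn.div ?_ hcc fun x hx => (hu x hx).ne'
    refine hbc.neg.add (ContinuousOn.sqrt ?_)
    fun_prop
  refine no_retraction (n := n) (r := fun x => x + lam x • u x) ?_ ?_ ?_
  · exact continuousOn_id.add (hlc.smul huc)
  · intro x hx
    have hc := hu x hx
    rw [mem_sphere_iff, norm_add_sq_real, norm_smul, inner_smul_right, mul_pow,
      Real.norm_eq_abs, sq_abs]
    change ‖x‖ ^ 2 + 2 * (lam x * b x) + lam x ^ 2 * c x = 1
    have hd : 0 ≤ b x ^ 2 + c x * (1 - ‖x‖ ^ 2) := by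
      have := (mem_ball_iff x).1 hx
      have h5 : 0 ≤ c x * (1 - ‖x‖ ^ 2) := mul_nonneg hc.le (by linarith)
      nlinarith [sq_nonneg (b x)]
    have hs := Real.sq_sqrt hd
    have hl : lam x * c x = - b x + Real.sqrt (b x ^ 2 + c x * (1 - ‖x‖ ^ 2)) :=
      div_mul_cancel₀ _ hc.ne'
    set w := Real.sqrt (b x ^ 2 + c x * (1 - ‖x‖ ^ 2))
    have h6 : c x * (‖x‖ ^ 2 + 2 * (lam x * b x) + lam x ^ 2 * c x - 1) = 0 := by
      have : lam x * c x + b x = w := by linarith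
      rw [← this] at hs
      nlinarith
    have := (mul_eq_zero.1 h6).resolve_left hc.ne'
    linarith
  · intro x hx
    have hx1 := (mem_sphere_iff x).1 hx
    have hx2 : ‖x‖ = 1 := mem_sphere_zero_iff_norm.1 hx
    have hfx : ‖f x‖ ≤ 1 := mem_closedBall_zero_iff.1 (h1 x (sphere_subset_closedBall hx))
    have hb : 0 ≤ b x := by
      have h4 : b x = 1 - inner ℝ x (f x) := by
        simp only [b, u]
        rw [inner_sub_right, real_inner_self_eq_norm_sq, hx1]
      have h5 := real_inner_le_norm x (f x)
      rw [hx2, one_mul] at h5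
      linarith
    have : lam x = 0 := by
      simp only [lam]
      rw [hx1]
      simp [Real.sqrt_sq hb]
    simp [this]

end AS


namespace AS

open Metric Set

set_option linter.unusedSectionVars false

/-- Invariance of domain, local form. -/
theorem inv_domain_aux {n : ℕ} {f : EB n → EB n} (hf : ContinuousOn f (closedBall 0 1))
    (hi : InjOn f (closedBall 0 1)) : f 0 ∈ interior (f '' closedBall 0 1) := by
  set K := f '' closedBall (0 : EB n) 1 with hK
  have hKc : IsCompact K := (isCompact_closedBall _ _).image_of_continuousOn hf
  have h0m : (0 : EB n) ∈ closedBall (0 : EB n) 1 := by simp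
  obtain ⟨G, hG⟩ : ∃ G : C(EB n, EB n), ∀ x ∈ closedBall (0 : EB n) 1, G (f x) = x := by
    have he : Topology.IsClosedEmbedding (fun x : closedBall (0 : EB n) 1 => f x) :=
      (continuousOn_iff_continuous_domRestrict.1 hf).isClosedEmbedding
        (fun x y h => Subtype.ext (hi x.2 y.2 h))
    obtain ⟨G, hG⟩ := ContinuousMap.exists_extension he
      (⟨Subtype.val, continuous_subtype_val⟩ : C(closedBall (0 : EB n) 1, EB n))
    exact ⟨G, fun x hx => congrArg (fun h => h ⟨x, hx⟩) hG⟩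
  have stab : ∀ H : EB n → EB n, ContinuousOn H K → (∀ y ∈ K, ‖H y - G y‖ ≤ 1) →
      ∃ y ∈ K, H y = 0 := by
    intro H hH h1
    obtain ⟨x, hx, hfx⟩ := brouwer (f := fun x => x - H (f x))
      (continuousOn_id.sub (hH.comp hf fun x hx => ⟨x, hx, rfl⟩)) (by
        intro x hx
        have := h1 (f x) ⟨x, hx, rfl⟩
        rw [hG x hx, norm_sub_rev] at this
        exact mem_closedBall_zero_iff.2 this)
    exact ⟨f x, ⟨x, hx, rfl⟩, by simpa using hfx⟩
  by_contra hnint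
  obtain ⟨ε, hε, hGε⟩ : ∃ ε > 0, ∀ y, ‖y - f 0‖ ≤ 2 * ε → ‖G y‖ ≤ 1 / 10 := by
    have h1 := Metric.continuousAt_iff.1 (G.continuous.continuousAt (x := f 0)) (1/10) (by norm_num)
    obtain ⟨d, hd, h2⟩ := h1
    refine ⟨d / 4, by positivity, fun y hy => ?_⟩
    have := h2 (x := y) (by rw [dist_eq_norm]; linarith)
    rw [hG 0 h0m, dist_zero_right] at this
    exact this.le
  obtain ⟨c, hcK, hc⟩ : ∃ c, c ∉ K ∧ ‖c - f 0‖ < ε := by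
    by_contra hcon
    push Not at hcon
    apply hnint
    rw [mem_interior]
    refine ⟨ball (f 0) ε, fun y hy => ?_, isOpen_ball, mem_ball_self hε⟩
    by_contra hy2
    have := hcon y hy2
    rw [mem_ball, dist_eq_norm] at hy
    linarith
  set S1 := K ∩ {y | ε ≤ ‖y - c‖} with hS1
  have hS1c : IsCompact S1 := hKc.inter_right
    (isClosed_le continuous_const (by fun_prop))
  have hS1G : ∀ y ∈ S1, G y ≠ 0 := by
    rintro y ⟨⟨x, hx, rfl⟩, hy⟩ h
    rw [hG x hx] at h
    subst h
    have hy' : ε ≤ ‖f 0 - c‖ := hy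
    rw [norm_sub_rev] at hy'
    linarith
  obtain ⟨δ, hδ, hδ1, hδ2⟩ : ∃ δ > 0, δ ≤ 1 / 10 ∧ ∀ y ∈ S1, δ ≤ ‖G y‖ := by
    by_cases hne : S1.Nonempty
    · obtain ⟨y, hy, hmin⟩ := hS1c.exists_isMinOn hne (G.continuous.norm.continuousOn)
      refine ⟨min (1/10) ‖G y‖, lt_min (by norm_num) (norm_pos_iff.2 (hS1G y hy)),
        min_le_left _ _, fun z hz => (min_le_right _ _).trans (hmin hz)⟩
    · refine ⟨1/10, by norm_num, le_rfl, fun y hy => (hne ⟨y, hy⟩).elim⟩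
  obtain ⟨P, hP, hPG, -⟩ := G.continuous.exists_contDiff_approx 1
    (continuous_const (y := δ / 2)) (fun _ => half_pos hδ)
  have hnull : MeasureTheory.volume (P '' sphere c ε) = 0 :=
    MeasureTheory.addHaar_image_eq_zero_of_differentiableOn_of_addHaar_eq_zero _
      ((hP.differentiable (by norm_num)).differentiableOn)
      (MeasureTheory.Measure.addHaar_sphere_of_ne_zero _ _ hε.ne')
  obtain ⟨v, hv, hvP⟩ : ∃ v ∈ ball (0 : EB n) (δ / 4), v ∉ P '' sphere c ε := by
    by_contra hcon
    push Not at hcon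
    have h1 := MeasureTheory.measure_mono_null hcon hnull
    exact (measure_ball_pos MeasureTheory.volume (0 : EB n) (by positivity : 0 < δ / 4)).ne' h1
  rw [mem_ball_zero_iff] at hv
  have hPG' : ∀ y, ‖P y - v - G y‖ < 3 * δ / 4 := by
    intro y
    have h1 := hPG y
    rw [dist_eq_norm] at h1
    calc ‖P y - v - G y‖ = ‖(P y - G y) - v‖ := by congr 1; abel
      _ ≤ ‖P y - G y‖ + ‖v‖ := norm_sub_le _ _
      _ < _ := by linarith
  let Ph : EB n → EB n := fun y => c + max (ε / ‖y - c‖) 1 • (y - c)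
  have hyc : ∀ y ∈ K, 0 < ‖y - c‖ := by
    intro y hy
    rw [norm_pos_iff, sub_ne_zero]
    rintro rfl; exact hcK hy
  have hPh1 : ∀ y ∈ K, ε ≤ ‖y - c‖ → Ph y = y := by
    intro y hy h
    have : max (ε / ‖y - c‖) 1 = 1 := max_eq_right ((div_le_one (hyc y hy)).2 h)
    simp [Ph, this]
  have hPh2 : ∀ y ∈ K, ‖y - c‖ < ε → ‖Ph y - c‖ = ε := by
    intro y hy h
    have : max (ε / ‖y - c‖) 1 = ε / ‖y - c‖ :=
      max_eq_left ((one_le_div (hyc y hy)).2 h.le)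
    simp only [Ph, this, add_sub_cancel_left, norm_smul, norm_div, norm_norm,
      Real.norm_of_nonneg hε.le]
    exact div_mul_cancel₀ _ (hyc y hy).ne'
  have hPhc : ContinuousOn Ph K := by
    have h1 : ContinuousOn (fun y : EB n => ‖y - c‖) K := by fun_prop
    have h2 : ContinuousOn (fun y : EB n => ε / ‖y - c‖) K :=
      continuousOn_const.div h1 fun y hy => (hyc y hy).ne'
    exact continuousOn_const.add ((h2.sup continuousOn_const).smul
      (continuousOn_id.sub continuousOn_const))
  obtain ⟨y, hy, hy0⟩ := stab (fun y => P (Ph y) - v)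
    ((hP.continuous.comp_continuousOn hPhc).sub continuousOn_const) (by
      intro y hy
      rcases le_or_gt ε ‖y - c‖ with h | h
      · rw [hPh1 y hy h]
        exact ((hPG' y).trans_le (by linarith)).le
      · have h1 := hPh2 y hy h
        have h2 : ‖G y‖ ≤ 1 / 10 := hGε y (by
          calc ‖y - f 0‖ = ‖(y - c) + (c - f 0)‖ := by congr 1; abel
            _ ≤ ‖y - c‖ + ‖c - f 0‖ := norm_add_le _ _
            _ ≤ _ := by linarith)
        have h3 : ‖G (Ph y)‖ ≤ 1 / 10 := hGε _ (by
          calc ‖Ph y - f 0‖ = ‖(Ph y - c) + (c - f 0)‖ := by congr 1; abel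
            _ ≤ ‖Ph y - c‖ + ‖c - f 0‖ := norm_add_le _ _
            _ ≤ _ := by linarith)
        calc ‖P (Ph y) - v - G y‖ = ‖(P (Ph y) - v - G (Ph y)) + (G (Ph y) - G y)‖ := by
              congr 1; abel
          _ ≤ ‖P (Ph y) - v - G (Ph y)‖ + (‖G (Ph y)‖ + ‖G y‖) :=
            (norm_add_le _ _).trans (by gcongr; exact norm_sub_le _ _)
          _ ≤ 1 := by linarith [hPG' (Ph y)])
  rcases le_or_gt ε ‖y - c‖ with h | h
  · rw [hPh1 y hy h] at hy0
    have h1 := hPG' y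
    rw [hy0, zero_sub, norm_neg] at h1
    have := hδ2 y ⟨hy, h⟩
    linarith
  · apply hvP
    exact ⟨Ph y, by rw [mem_sphere, dist_eq_norm, hPh2 y hy h], sub_eq_zero.1 hy0⟩

/-- Invariance of domain. -/
theorem inv_domain {n : ℕ} {f : EB n → EB n} {W : Set (EB n)} (hW : IsOpen W)
    (hf : ContinuousOn f W) (hi : InjOn f W) : IsOpen (f '' W) := by
  rw [isOpen_iff_mem_nhds]
  rintro _ ⟨x, hx, rfl⟩
  obtain ⟨r, hr, hrW⟩ := Metric.nhds_basis_closedBall.mem_iff.1 (hW.mem_nhds hx)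
  have hm : MapsTo (fun y : EB n => x + r • y) (closedBall 0 1) W := by
    intro y hy
    apply hrW
    rw [mem_closedBall_zero_iff] at hy
    rw [mem_closedBall, dist_eq_norm, add_sub_cancel_left, norm_smul, Real.norm_of_nonneg hr.le]
    nlinarith
  have := inv_domain_aux (f := fun y => f (x + r • y)) (hf.comp (by fun_prop) hm) (by
    intro y hy z hz h
    have := hi (hm hy) (hm hz) h
    simpa [hr.ne'] using this)
  have h2 := mem_interior_iff_mem_nhds.1 this
  simp only [smul_zero, add_zero] at h2
  refine Filter.mem_of_superset h2 ?_
  rintro _ ⟨y, hy, rfl⟩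
  exact ⟨_, hm hy, rfl⟩

/-- Invariance of dimension. -/
theorem inv_dim {m k : ℕ} {f : EB m → EB k} {W : Set (EB m)} (hW : IsOpen W) (hne : W.Nonempty)
    (hf : ContinuousOn f W) (hi : InjOn f W) : m ≤ k := by
  by_contra hlt
  push Not at hlt
  obtain ⟨L, hL⟩ : ∃ L : EB k →ₗ[ℝ] EB m, Function.Injective L :=
    finrank_le_iff_exists_linearMap.1 (by simp [hlt.le])
  have hLc : Continuous L := L.continuous_of_finiteDimensional
  have hopen := inv_domain hW (hLc.comp_continuousOn hf) (hL.comp_injOn hi)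
  have hsub : (fun x => L (f x)) '' W ⊆ (LinearMap.range L : Set (EB m)) := by
    rintro _ ⟨x, _, rfl⟩; exact ⟨_, rfl⟩
  have htop : LinearMap.range L = ⊤ := by
    apply Submodule.eq_top_of_nonempty_interior'
    obtain ⟨w, hw⟩ := hne
    exact ⟨L (f w), mem_interior.2 ⟨_, hsub, hopen, ⟨w, hw, rfl⟩⟩⟩
  have h1 := LinearMap.finrank_range_le L
  rw [htop, finrank_top] at h1
  simp at h1
  omega

end AS


namespace AS

open Metric Set

set_option linter.unusedSectionVars false

theorem cont_invFunOn {Y Z : Type} [TopologicalSpace Y] [TopologicalSpace Z] [T2Space Z]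
    [Nonempty Y] {f : Y → Z} {K : Set Y} (hK : IsCompact K) (hf : ContinuousOn f K)
    (hi : InjOn f K) : ContinuousOn (Function.invFunOn f K) (f '' K) := by
  rw [continuousOn_iff_isClosed]
  intro T hT
  refine ⟨f '' (K ∩ T), ((hK.inter_right hT).image_of_continuousOn
    (hf.mono inter_subset_left)).isClosed, ?_⟩
  ext z
  constructor
  · rintro ⟨hz, x, hx, rfl⟩
    refine ⟨⟨x, ⟨hx, ?_⟩, rfl⟩, ⟨x, hx, rfl⟩⟩
    have : Function.invFunOn f K (f x) = x := hi.leftInvOn_invFunOn hx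
    rw [mem_preimage, this] at hz
    exact hz
  · rintro ⟨⟨x, ⟨hx, hxT⟩, rfl⟩, h2⟩
    refine ⟨?_, h2⟩
    have : Function.invFunOn f K (f x) = x := hi.leftInvOn_invFunOn hx
    rw [mem_preimage, this]
    exact hxT

theorem sphere_inv {m k : ℕ} {f : EB m → EB k} {U : Set (EB m)} (hU : IsOpen U)
    (hne : (sphere (0 : EB m) 1 ∩ U).Nonempty) (hf : ContinuousOn f (sphere 0 1 ∩ U))
    (hi : InjOn f (sphere 0 1 ∩ U)) :
    m ≤ k + 1 ∧ (m = k + 1 → IsOpen (f '' (sphere 0 1 ∩ U))) := by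
  cases m with
  | zero => exact ⟨by omega, fun h => by omega⟩
  | succ n =>
    have : Fact (Module.finrank ℝ (EB (n + 1)) = n + 1) := ⟨by simp⟩
    have key : ∀ y ∈ sphere (0 : EB (n + 1)) 1 ∩ U, ∃ (g : EB n → EB (n + 1)) (W : Set (EB n)),
        IsOpen W ∧ ContinuousOn g W ∧ InjOn g W ∧ MapsTo g W (sphere 0 1 ∩ U) ∧
        ∃ w ∈ W, g w = y := by
      intro y hy
      let s := stereographic' n (-(⟨y, hy.1⟩ : sphere (0 : EB (n + 1)) 1))
      have ht : s.target = univ := stereographic'_target _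
      have hy1 : (⟨y, hy.1⟩ : sphere (0 : EB (n + 1)) 1) ∈ s.source := by
        rw [stereographic'_source]
        exact ne_neg_of_mem_unit_sphere ℝ _
      have hc : Continuous s.symm := by
        rw [← continuousOn_univ, ← ht]
        exact s.continuousOn_symm
      have hc2 : Continuous fun z => (s.symm z : EB (n + 1)) := continuous_subtype_val.comp hc
      refine ⟨fun z => (s.symm z : EB (n + 1)), (fun z => (s.symm z : EB (n + 1))) ⁻¹' U,
        hU.preimage hc2, hc2.continuousOn, ?_, fun z hz => ⟨(s.symm z).2, hz⟩,
        s ⟨y, hy.1⟩, ?_, ?_⟩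
      · intro z _ z' _ h
        exact s.symm.injOn (by simp [ht]) (by simp [ht]) (Subtype.ext h)
      · rw [mem_preimage, s.left_inv hy1]; exact hy.2
      · exact congrArg Subtype.val (s.left_inv hy1)
    constructor
    · obtain ⟨y, hy⟩ := hne
      obtain ⟨g, W, hW, hgc, hgi, hm, w, hw, -⟩ := key y hy
      have := inv_dim (f := fun z => f (g z)) hW ⟨w, hw⟩ (hf.comp hgc hm) (hi.comp hgi hm)
      omega
    · intro hnk
      obtain rfl : n = k := by omega
      rw [isOpen_iff_mem_nhds]
      rintro _ ⟨y, hy, rfl⟩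
      obtain ⟨g, W, hW, hgc, hgi, hm, w, hw, hwy⟩ := key y hy
      have := inv_domain (f := fun z => f (g z)) hW (hf.comp hgc hm) (hi.comp hgi hm)
      refine Filter.mem_of_superset (this.mem_nhds ⟨w, hw, ?_⟩) ?_
      · exact congrArg f hwy
      · rintro _ ⟨z, hz, rfl⟩
        exact ⟨_, hm hz, rfl⟩

section CW

variable {F X : Type} [Fintype F] [TopologicalSpace X] (C : RegularCW F X)

open Classical in
/-- Characteristic map extended to the whole Euclidean space. -/
noncomputable def ext (f : F) : EB (C.dim f) → X := fun x =>
  if h : x ∈ closedBall (0 : EB (C.dim f)) 1 then C.charMap f ⟨x, h⟩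
  else C.charMap f ⟨0, by simp⟩

theorem ext_apply (f : F) {x : EB (C.dim f)} (h : x ∈ closedBall (0 : EB (C.dim f)) 1) :
    ext C f x = C.charMap f ⟨x, h⟩ := dif_pos h

theorem ext_cont (f : F) : ContinuousOn (ext C f) (closedBall 0 1) := by
  rw [continuousOn_iff_continuous_domRestrict]
  convert C.continuous_charMap f using 1
  ext x
  exact ext_apply C f x.2

theorem ext_inj (f : F) : InjOn (ext C f) (closedBall 0 1) := by
  intro x hx y hy h
  rw [ext_apply C f hx, ext_apply C f hy] at h
  exact congrArg Subtype.val (C.injective_charMap f h)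

theorem cell_eq (f : F) : C.cell f = ext C f '' closedBall 0 1 := by
  ext z
  constructor
  · rintro ⟨x, rfl⟩
    exact ⟨x, x.2, ext_apply C f x.2⟩
  · rintro ⟨x, hx, rfl⟩
    exact ⟨⟨x, hx⟩, (ext_apply C f hx).symm⟩

/-- Open cell. -/
noncomputable def oc (f : F) : Set X := ext C f '' ball 0 1

/-- Boundary of a cell. -/
noncomputable def bd (f : F) : Set X := ext C f '' sphere 0 1

theorem cell_eq_union (f : F) : C.cell f = oc C f ∪ bd C f := by
  rw [cell_eq, oc, bd, ← image_union, ball_union_sphere]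

theorem oc_sub (f : F) : oc C f ⊆ C.cell f := by
  rw [cell_eq_union]; exact subset_union_left

theorem bd_sub (f : F) : bd C f ⊆ C.cell f := by
  rw [cell_eq_union]; exact subset_union_right

theorem oc_bd_disj (f : F) : Disjoint (oc C f) (bd C f) := by
  rw [Set.disjoint_left]
  rintro _ ⟨x, hx, rfl⟩ ⟨y, hy, h⟩
  have := ext_inj C f (sphere_subset_closedBall hy) (ball_subset_closedBall hx) h
  subst this
  rw [mem_ball_zero_iff] at hx
  rw [mem_sphere_zero_iff_norm] at hy
  linarith

theorem oc_disj {f g : F} (h : f ≠ g) : Disjoint (oc C f) (oc C g) := by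
  have key : ∀ f, oc C f ⊆ C.charMap f '' {x | ‖(x : EuclideanSpace ℝ (Fin (C.dim f)))‖ < 1} := by
    rintro f _ ⟨x, hx, rfl⟩
    exact ⟨⟨x, ball_subset_closedBall hx⟩, mem_ball_zero_iff.1 hx,
      (ext_apply C f (ball_subset_closedBall hx)).symm⟩
  exact (C.disjoint_openCells f g h).mono (key f) (key g)

theorem oc_eq {f g : F} {x : X} (hf : x ∈ oc C f) (hg : x ∈ oc C g) : f = g := by
  by_contra h
  exact Set.disjoint_left.1 (oc_disj C h) hf hg

theorem bd_lower {f : F} {x : X} (hx : x ∈ bd C f) : ∃ g, C.dim g < C.dim f ∧ x ∈ C.cell g := by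
  obtain ⟨y, hy, rfl⟩ := hx
  have h1 := C.boundary f ⟨⟨y, sphere_subset_closedBall hy⟩, mem_sphere_zero_iff_norm.1 hy, rfl⟩
  rw [← ext_apply] at h1
  simp only [mem_iUnion] at h1
  obtain ⟨g, hg, h2⟩ := h1
  exact ⟨g, hg, h2⟩

theorem mem_cell_oc (n : ℕ) : ∀ (f : F) (x : X), C.dim f = n → x ∈ C.cell f →
    x ∈ oc C f ∨ ∃ g, C.dim g < C.dim f ∧ x ∈ oc C g := by
  induction n using Nat.strong_induction_on with
  | _ n ih =>
    intro f x hf hx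
    rw [cell_eq_union] at hx
    rcases hx with hx | hx
    · exact Or.inl hx
    · right
      obtain ⟨g, hg, hxg⟩ := bd_lower C hx
      rcases ih (C.dim g) (hf ▸ hg) g x rfl hxg with h | ⟨g', hg', h⟩
      · exact ⟨g, hg, h⟩
      · exact ⟨g', hg'.trans hg, h⟩

theorem bd_oc {f : F} {x : X} (hx : x ∈ bd C f) : ∃ g, C.dim g < C.dim f ∧ x ∈ oc C g := by
  obtain ⟨g, hg, hxg⟩ := bd_lower C hx
  rcases mem_cell_oc C _ g x rfl hxg with h | ⟨g', hg', h⟩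
  · exact ⟨g, hg, h⟩
  · exact ⟨g', hg'.trans hg, h⟩

theorem cell_compact (f : F) : IsCompact (C.cell f) := by
  rw [cell_eq]
  exact (isCompact_closedBall _ _).image_of_continuousOn (ext_cont C f)

theorem bd_compact (f : F) : IsCompact (bd C f) :=
  (isCompact_sphere _ _).image_of_continuousOn ((ext_cont C f).mono sphere_subset_closedBall)

/-- Inverse of the characteristic map. -/
noncomputable def cinv (f : F) : X → EB (C.dim f) :=
  Function.invFunOn (ext C f) (closedBall 0 1)

theorem cinv_ext (f : F) {x : EB (C.dim f)} (hx : x ∈ closedBall (0 : EB (C.dim f)) 1) :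
    cinv C f (ext C f x) = x := (ext_inj C f).leftInvOn_invFunOn hx

theorem ext_cinv (f : F) {z : X} (hz : z ∈ C.cell f) : ext C f (cinv C f z) = z := by
  rw [cell_eq] at hz
  obtain ⟨x, hx, rfl⟩ := hz
  rw [cinv_ext C f hx]

variable [T2Space X]

theorem cinv_cont (f : F) : ContinuousOn (cinv C f) (C.cell f) := by
  rw [cell_eq]
  exact cont_invFunOn (isCompact_closedBall _ _) (ext_cont C f) (ext_inj C f)

theorem bd_key {τ h : F} {O : Set X} (hO : IsOpen O)
    (hmax : ∀ h', (oc C h' ∩ O ∩ bd C τ).Nonempty → C.dim h' ≤ C.dim h)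
    (hne : (oc C h ∩ O ∩ bd C τ).Nonempty) :
    C.dim τ ≤ C.dim h + 1 ∧
      (C.dim τ = C.dim h + 1 → IsOpen (cinv C h '' (oc C h ∩ O ∩ bd C τ))) := by
  let Z : Set X := ⋃ g ∈ {g : F | g ≠ h ∧ C.dim g ≤ C.dim h}, C.cell g
  have hZ : IsClosed Z :=
    (Set.toFinite _).isClosed_biUnion fun g _ => (cell_compact C g).isClosed
  have hZh : Disjoint (oc C h) Z := by
    rw [Set.disjoint_left]
    intro x hx hxZ
    simp only [Z, mem_iUnion] at hxZ
    obtain ⟨g, ⟨hgh, hgd⟩, hxg⟩ := hxZ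
    rcases mem_cell_oc C _ g x rfl hxg with h1 | ⟨g', hg', h1⟩
    · exact hgh (oc_eq C h1 hx)
    · have := oc_eq C h1 hx
      subst this
      omega
  have hOZ : (O \ Z) ∩ bd C τ = oc C h ∩ O ∩ bd C τ := by
    ext x
    constructor
    · rintro ⟨⟨hxO, hxZ⟩, hxb⟩
      refine ⟨⟨?_, hxO⟩, hxb⟩
      obtain ⟨g, hg, hxg⟩ := bd_oc C hxb
      have h1 := hmax g ⟨x, ⟨hxg, hxO⟩, hxb⟩
      by_cases hgh : g = h
      · rwa [← hgh]
      · refine (hxZ ?_).elim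
        simp only [Z, mem_iUnion]
        exact ⟨g, ⟨hgh, h1⟩, oc_sub C g hxg⟩
    · rintro ⟨⟨hxh, hxO⟩, hxb⟩
      exact ⟨⟨hxO, fun hz => Set.disjoint_left.1 hZh hxh hz⟩, hxb⟩
  obtain ⟨U, hU, hUO⟩ := continuousOn_iff'.1 (ext_cont C τ) (O \ Z) (hO.sdiff hZ)
  have hmemU : ∀ y ∈ sphere (0 : EB (C.dim τ)) 1, y ∈ U ↔ ext C τ y ∈ O \ Z := by
    intro y hy
    have h1 := Set.ext_iff.1 hUO y
    have h2 := sphere_subset_closedBall hy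
    constructor
    · intro h3; exact (h1.2 ⟨h3, h2⟩).1
    · intro h3; exact (h1.1 ⟨h3, h2⟩).1
  have himg : ext C τ '' (sphere 0 1 ∩ U) = oc C h ∩ O ∩ bd C τ := by
    rw [← hOZ]
    ext x
    constructor
    · rintro ⟨y, ⟨hy, hyU⟩, rfl⟩
      exact ⟨(hmemU y hy).1 hyU, ⟨y, hy, rfl⟩⟩
    · rintro ⟨hx, ⟨y, hy, rfl⟩⟩
      exact ⟨y, ⟨hy, (hmemU y hy).2 hx⟩, rfl⟩
  have hmaps : MapsTo (ext C τ) (sphere 0 1 ∩ U) (C.cell h) := by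
    intro y hy
    have : ext C τ y ∈ oc C h ∩ O ∩ bd C τ := himg ▸ ⟨y, hy, rfl⟩
    exact oc_sub C h this.1.1
  have hsub : sphere (0 : EB (C.dim τ)) 1 ∩ U ⊆ closedBall 0 1 :=
    fun y hy => sphere_subset_closedBall hy.1
  have := sphere_inv (f := fun y => cinv C h (ext C τ y)) hU (by
      rw [← himg] at hne
      exact hne.of_image) ((cinv_cont C h).comp ((ext_cont C τ).mono hsub) hmaps) (by
      intro y hy z hz hyz
      have h1 := congrArg (ext C h) hyz
      simp only at h1
      rw [ext_cinv C h (hmaps hy), ext_cinv C h (hmaps hz)] at h1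
      exact ext_inj C τ (hsub hy) (hsub hz) h1)
  refine ⟨this.1, fun hd => ?_⟩
  rw [← himg, image_image]
  exact this.2 hd

theorem cell_sub_bd {τ h : F} (hd : C.dim τ = C.dim h + 1) (hne : (oc C h ∩ bd C τ).Nonempty) :
    C.cell h ⊆ bd C τ := by
  have hop := (bd_key C (τ := τ) (h := h) isOpen_univ (by
    rintro h' ⟨x, ⟨hx, -⟩, hxb⟩
    obtain ⟨g, hg, hxg⟩ := bd_oc C hxb
    rw [oc_eq C hx hxg]
    omega) (by simpa using hne)).2 hd
  rw [inter_univ] at hop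
  have hbc : IsClosed (bd C τ) := (bd_compact C τ).isClosed
  have hc : ContinuousOn (ext C h) (ball 0 1) := (ext_cont C h).mono ball_subset_closedBall
  have hop2 := hc.isOpen_inter_preimage isOpen_ball hbc.isOpen_compl
  have hb : ball (0 : EB (C.dim h)) 1 ⊆ cinv C h '' (oc C h ∩ bd C τ) := by
    refine IsPreconnected.subset_left_of_subset_union hop hop2 ?_ ?_ ?_
      (convex_ball (0 : EB (C.dim h)) 1).isPreconnected
    · rw [Set.disjoint_left]
      rintro _ ⟨x, ⟨hx, hxb⟩, rfl⟩ ⟨-, h2⟩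
      apply h2
      rw [ext_cinv C h (oc_sub C h hx)]
      exact hxb
    · intro y hy
      by_cases h1 : ext C h y ∈ bd C τ
      · left
        exact ⟨ext C h y, ⟨⟨y, hy, rfl⟩, h1⟩, cinv_ext C h (ball_subset_closedBall hy)⟩
      · right
        exact ⟨hy, h1⟩
    · obtain ⟨x, ⟨y, hy, rfl⟩, hxb⟩ := hne
      exact ⟨y, hy, ext C h y, ⟨⟨y, hy, rfl⟩, hxb⟩, cinv_ext C h (ball_subset_closedBall hy)⟩
  have hoc : ext C h '' ball 0 1 ⊆ bd C τ := by
    rintro _ ⟨y, hy, rfl⟩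
    obtain ⟨x, ⟨hx, hxb⟩, h2⟩ := hb hy
    rw [← h2, ext_cinv C h (oc_sub C h hx)]
    exact hxb
  have hcb := closure_ball (0 : EB (C.dim h)) (one_ne_zero (α := ℝ))
  rw [cell_eq, ← hcb]
  have h3 := ext_cont C h
  rw [← hcb] at h3
  exact h3.image_closure.trans (hbc.closure_subset_iff.2 hoc)

/-- The boundary of a cell is a union of closed cells. -/
theorem bd_union {τ : F} {x : X} (hx : x ∈ bd C τ) :
    ∃ g, C.dim g < C.dim τ ∧ x ∈ C.cell g ∧ C.cell g ⊆ C.cell τ := by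
  classical
  by_contra hcon
  push Not at hcon
  let Q : Set X := ⋃ g ∈ {g : F | C.dim g < C.dim τ ∧ C.cell g ⊆ C.cell τ}, C.cell g
  have hQ : IsClosed Q :=
    (Set.toFinite _).isClosed_biUnion fun g _ => (cell_compact C g).isClosed
  have hxQ : x ∉ Q := by
    intro h
    simp only [Q, mem_iUnion] at h
    obtain ⟨g, ⟨h1, h2⟩, h3⟩ := h
    exact hcon g h1 h3 h2
  obtain ⟨g0, hg0, hxg0⟩ := bd_oc C hx
  obtain ⟨h, hh, hmax⟩ := Finset.exists_max_image
    (Finset.univ.filter fun h => (oc C h ∩ Qᶜ ∩ bd C τ).Nonempty) C.dim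
    ⟨g0, by simpa using ⟨x, ⟨hxg0, hxQ⟩, hx⟩⟩
  simp only [Finset.mem_filter, Finset.mem_univ, true_and] at hh hmax
  have h1 := (bd_key C hQ.isOpen_compl hmax hh).1
  obtain ⟨z, ⟨hz1, hz2⟩, hz3⟩ := hh
  obtain ⟨g, hg, hzg⟩ := bd_oc C hz3
  have := oc_eq C hz1 hzg
  subst this
  have h2 := cell_sub_bd C (by omega) ⟨z, hz1, hz3⟩
  apply hz2
  simp only [Q, mem_iUnion]
  exact ⟨h, ⟨hg, h2.trans (bd_sub C τ)⟩, oc_sub C h hz1⟩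

end CW

end AS


namespace AS

open Metric Set

set_option linter.unusedSectionVars false

section Eu

variable {F X : Type} [Fintype F] [UniformSpace X] [T2Space X] (C : RegularCW F X)

theorem eul_empty : Eul (∅ : Set X) ∅ 0 := by
  have h : ∀ k, Dim k (∅ : Set X) ∅ 0 := fun k =>
    deform (h := fun _ x => x) (fun U hU => ⟨U, hU, 1, one_pos, by simp⟩) (by simp) (by simp)
      (by simp) (by simp) (by simp) k
  exact ⟨fun k => (h k).1, 0, fun N _ => ⟨(h N).2, by simp [fun k => (h k).2]⟩⟩

theorem cell_dim (f : F) (k : ℕ) : Dim k (C.cell f) (bd C f) (if k = C.dim f then 1 else 0) := by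
  obtain ⟨e⟩ := iso_HH (f := cinv C f) (g := ext C f) (A := C.cell f) (B := bd C f)
    (A' := closedBall 0 1) (B' := sphere 0 1)
    (UCO_of_cont (cell_compact C f) (cinv_cont C f))
    (UCO_of_cont (isCompact_closedBall _ _) (ext_cont C f)) (bd_sub C f)
    sphere_subset_closedBall (by
      intro x hx
      rw [cell_eq] at hx
      obtain ⟨y, hy, rfl⟩ := hx
      rw [cinv_ext C f hy]; exact hy)
    (by
      rintro _ ⟨y, hy, rfl⟩
      rw [cinv_ext C f (sphere_subset_closedBall hy)]; exact hy)
    (by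
      intro y hy
      rw [cell_eq]
      exact ⟨y, hy, rfl⟩)
    (fun y hy => ⟨y, hy, rfl⟩) (fun x hx => ext_cinv C f hx) (fun y hy => cinv_ext C f hy) k
  exact (ball_dim (C.dim f) k).of_equiv e

theorem real_compact (D : Finset F) : IsCompact (C.real D) :=
  D.isCompact_biUnion fun f _ => cell_compact C f

/-- Subsets of faces containing the boundary of their members. -/
def Good (D : Finset F) : Prop :=
  ∀ f ∈ D, ∀ x ∈ bd C f, ∃ g ∈ D, C.dim g < C.dim f ∧ x ∈ C.cell g

theorem good_of_subcomplex {D : Finset F} (hD : C.Subcomplex D) : Good C D := by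
  intro f hf x hx
  obtain ⟨g, h1, h2, h3⟩ := bd_union C hx
  exact ⟨g, hD g f h3 hf, h1, h2⟩

theorem eul_real [DecidableEq F] (n : ℕ) : ∀ D : Finset F, D.card = n → Good C D →
    Eul (C.real D) ∅ (∑ f ∈ D, (-1 : ℤ) ^ C.dim f) := by
  induction n with
  | zero =>
    intro D hD _
    rw [Finset.card_eq_zero] at hD
    subst hD
    simpa [RegularCW.real] using eul_empty
  | succ n ih =>
    intro D hD hG
    have hne : D.Nonempty := by rw [← Finset.card_pos]; omega
    obtain ⟨f, hf, hmax⟩ := Finset.exists_max_image D C.dim hne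
    have hG' : Good C (D.erase f) := by
      intro g hg x hx
      rw [Finset.mem_erase] at hg
      obtain ⟨g', hg', hd, hx'⟩ := hG g hg.2 x hx
      refine ⟨g', Finset.mem_erase.2 ⟨?_, hg'⟩, hd, hx'⟩
      rintro rfl
      have := hmax g hg.2
      omega
    have h1 := ih (D.erase f) (by rw [Finset.card_erase_of_mem hf]; omega) hG'
    have hun : C.real D = C.real (D.erase f) ∪ C.cell f := by
      ext x
      simp only [RegularCW.real, mem_iUnion, mem_union, Finset.mem_erase]
      constructor
      · rintro ⟨g, hg, hx⟩
        by_cases hgf : g = f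
        · right; rwa [← hgf]
        · left; exact ⟨g, ⟨hgf, hg⟩, hx⟩
      · rintro (⟨g, ⟨_, hg⟩, hx⟩ | hx)
        · exact ⟨g, hg, hx⟩
        · exact ⟨f, hf, hx⟩
    have hnint : C.real (D.erase f) ∩ C.cell f = bd C f := by
      ext x
      simp only [RegularCW.real, mem_iUnion, mem_inter_iff, Finset.mem_erase]
      constructor
      · rintro ⟨⟨g, ⟨hgf, hg⟩, hxg⟩, hxf⟩
        rw [cell_eq_union] at hxf
        refine hxf.resolve_left fun hxo => ?_
        have hd := hmax g hg
        rcases mem_cell_oc C _ g x rfl hxg with h1 | ⟨g', hg', h1⟩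
        · exact hgf (oc_eq C h1 hxo)
        · have := oc_eq C h1 hxo
          subst this
          omega
      · intro hx
        obtain ⟨g, hg, hd, hxg⟩ := hG f hf x hx
        refine ⟨⟨g, ⟨?_, hg⟩, hxg⟩, bd_sub C f hx⟩
        rintro rfl
        omega
    have hrel : Eul (C.real D) (C.real (D.erase f)) ((-1) ^ C.dim f) := by
      apply Eul.of_dim
      intro k
      obtain ⟨e⟩ := excision (UE_of_compact (real_compact C (D.erase f)) (cell_compact C f)) k
      rw [hnint, ← hun] at e
      exact (cell_dim C f k).of_equiv e.symm
    have := hrel.add (by rw [hun]; exact subset_union_left) (empty_subset _) h1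
    rwa [Finset.add_sum_erase D (fun f => (-1 : ℤ) ^ C.dim f) hf] at this

theorem eul_contractible {A : Set X} (hA : IsCompact A) (hc : ContractibleSpace A) :
    Eul A ∅ 1 := by
  obtain ⟨c, ⟨H⟩⟩ := id_nullhomotopic A
  classical
  let h : ℝ → X → X := fun t x =>
    if hx : x ∈ A then (H (Set.projIcc 0 1 zero_le_one t, ⟨x, hx⟩) : X) else x
  have hap : ∀ t x (hx : x ∈ A), h t x = H (Set.projIcc 0 1 zero_le_one t, ⟨x, hx⟩) :=
    fun t x hx => dif_pos hx
  have hcont : ContinuousOn (fun p : ℝ × X => h p.1 p.2) (Icc (0 : ℝ) 1 ×ˢ A) := by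
    rw [continuousOn_iff_continuous_domRestrict]
    have h1 : Continuous fun p : (Icc (0 : ℝ) 1 ×ˢ A : Set (ℝ × X)) =>
        (H (Set.projIcc 0 1 zero_le_one p.1.1, ⟨p.1.2, p.2.2⟩) : X) := by
      refine continuous_subtype_val.comp (H.continuous.comp ?_)
      exact (continuous_projIcc.comp (continuous_fst.comp continuous_subtype_val)).prodMk
        ((continuous_snd.comp continuous_subtype_val).subtype_mk _)
    convert h1 using 1
    ext p
    exact hap p.1.1 p.1.2 p.2.2
  have := contractible (h := h) (A := A) (UH_of_cont hA hcont) (by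
    intro t _ x hx
    rw [hap t x hx]
    exact Subtype.coe_prop _) (by
    intro x hx
    rw [hap 0 x hx, Set.projIcc_left]
    exact congrArg Subtype.val (H.apply_zero ⟨x, hx⟩)) (c := (c : X)) c.2 (by
    intro x hx
    rw [hap 1 x hx, Set.projIcc_right]
    exact congrArg Subtype.val (H.apply_one ⟨x, hx⟩))
  simpa using Eul.of_dim this

end Eu

/-- Euler characteristic of a contractible subcomplex. -/
theorem euler_one {F X : Type} [Fintype F] [DecidableEq F] [TopologicalSpace X] [T2Space X]
    (C : RegularCW F X) (D : Finset F) (hD : C.Subcomplex D)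
    (hcontr : ContractibleSpace (C.real D)) : ∑ f ∈ D, (-1 : ℤ) ^ C.dim f = 1 := by
  have : CompactSpace X := ⟨by
    have h1 : (univ : Set X) = ⋃ f, C.cell f := C.cover.symm
    rw [h1]
    exact isCompact_iUnion fun f => cell_compact C f⟩
  letI : UniformSpace X := uniformSpaceOfCompactR1
  exact (eul_real C _ D rfl (good_of_subcomplex C hD)).unique
    (eul_contractible (real_compact C D) hcontr)

end AS


namespace AS

theorem count_zero {F : Type} [DecidableEq F] (S : MorseSetup F) (hS : ∀ σ, ¬ S.facet σ σ)
    (D : Finset F) (j : ℕ) (Φ : Finset (F × F)) (hΦ : IsOutJCollapsingSeq S Φ D j)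
    (he : ∑ f ∈ D, (-1 : ℤ) ^ S.dim f = 1) : ∀ τ, ¬ OutwardlyMatched Φ D τ := by
  classical
  obtain ⟨⟨v, hvD, ⟨⟨hdvf, hac⟩, hv0, hcrit⟩⟩, hj⟩ := hΦ
  have uniq : ∀ p ∈ Φ, ∀ q ∈ Φ, ∀ x, (x = p.1 ∨ x = p.2) → (x = q.1 ∨ x = q.2) → p = q := by
    intro p hp q hq x h1 h2
    by_contra hpq
    obtain ⟨a, b, c, d⟩ := hdvf.2 p hp q hq hpq
    rcases h1 with rfl | rfl <;> rcases h2 with h | h <;> contradiction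
  let Dout := D.filter fun x => OutwardlyMatched Φ D x
  let Φ' := Φ.filter fun p => p.1 ∈ D ∧ p.2 ∈ D
  let Din := Φ'.biUnion fun p => {p.1, p.2}
  have hvc := (hcrit v).2 rfl
  have hmemin : ∀ x, x ∈ Din ↔ ∃ p ∈ Φ', x = p.1 ∨ x = p.2 := by
    intro x; simp [Din]
  have hD : D = insert v (Dout ∪ Din) := by
    ext x
    rw [Finset.mem_insert, Finset.mem_union, hmemin]
    constructor
    · intro hx
      by_cases hxv : x = v
      · exact Or.inl hxv
      right
      have h1 : ¬ IsCritical Φ x := fun h => hxv ((hcrit x).1 h)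
      unfold IsCritical at h1
      push Not at h1
      obtain ⟨p, hp, h2⟩ := h1
      by_cases hpD : p.1 ∈ D ∧ p.2 ∈ D
      · right
        refine ⟨p, Finset.mem_filter.2 ⟨hp, hpD⟩, ?_⟩
        by_cases h3 : x = p.1
        · exact Or.inl h3
        · exact Or.inr (h2 h3)
      · left
        refine Finset.mem_filter.2 ⟨hx, hx, p, hp, ?_⟩
        by_cases h3 : x = p.1
        · subst h3
          exact Or.inl ⟨rfl, fun h => hpD ⟨hx, h⟩⟩
        · have h4 := h2 h3
          subst h4
          exact Or.inr ⟨rfl, fun h => hpD ⟨h, hx⟩⟩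
    · rintro (rfl | h | ⟨p, hp, h⟩)
      · exact hvD
      · exact (Finset.mem_filter.1 h).1
      · have := (Finset.mem_filter.1 hp).2
        rcases h with rfl | rfl
        · exact this.1
        · exact this.2
  have hvn : v ∉ Dout ∪ Din := by
    rw [Finset.mem_union, hmemin]
    rintro (h | ⟨p, hp, h⟩)
    · obtain ⟨-, p, hp, h⟩ := (Finset.mem_filter.1 h).2
      have := hvc p hp
      rcases h with h | h
      · exact this.1 h.1.symm
      · exact this.2 h.1.symm
    · have := hvc p (Finset.mem_filter.1 hp).1
      rcases h with h | h
      · exact this.1 h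
      · exact this.2 h
  have hdisj : Disjoint Dout Din := by
    rw [Finset.disjoint_left]
    intro x hx hx2
    obtain ⟨q, hq, h2⟩ := (hmemin x).1 hx2
    obtain ⟨-, p, hp, h⟩ := (Finset.mem_filter.1 hx).2
    obtain ⟨hq1, hq2⟩ := Finset.mem_filter.1 hq
    have : p = q := uniq p hp q hq1 x (by
      rcases h with h | h
      · exact Or.inl h.1.symm
      · exact Or.inr h.1.symm) h2
    subst this
    rcases h with h | h
    · exact h.2 hq2.2
    · exact h.2 hq2.1
  have hin : ∑ f ∈ Din, (-1 : ℤ) ^ S.dim f = 0 := by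
    rw [Finset.sum_biUnion]
    · refine Finset.sum_eq_zero fun p hp => ?_
      have hf := hdvf.1 p (Finset.mem_filter.1 hp).1
      have hne : p.1 ≠ p.2 := fun h => hS p.1 (by rw [← h] at hf; exact hf)
      rw [Finset.sum_pair hne, S.facet_dim _ _ hf, pow_succ]
      ring
    · intro p hp q hq hpq
      change Disjoint _ _
      rw [Finset.disjoint_left]
      intro x h1 h2
      simp only [Finset.mem_insert, Finset.mem_singleton] at h1 h2
      exact hpq (uniq p (Finset.mem_filter.1 hp).1 q (Finset.mem_filter.1 hq).1 x h1 h2)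
  have hout : ∑ f ∈ Dout, (-1 : ℤ) ^ S.dim f = Dout.card * (-1) ^ j := by
    rw [Finset.sum_congr rfl fun f hf => by rw [hj f (Finset.mem_filter.1 hf).2]]
    simp
  rw [hD, Finset.sum_insert hvn, Finset.sum_union hdisj, hin, hout, hv0] at he
  have h0 : (Dout.card : ℤ) * (-1) ^ j = 0 := by
    simp only [pow_zero, add_zero] at he
    linarith
  have h1 : Dout.card = 0 := by
    rcases mul_eq_zero.1 h0 with h | h
    · exact_mod_cast h
    · exact absurd h (pow_ne_zero _ (by norm_num))
  intro τ hτ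
  have : τ ∈ Dout := Finset.mem_filter.2 ⟨hτ.1, hτ⟩
  rw [Finset.card_eq_zero.1 h1] at this
  simp at this

theorem restrict {F : Type} [DecidableEq F] (S : MorseSetup F)
    (D : Finset F) (j : ℕ) (Φ : Finset (F × F)) (hΦ : IsOutJCollapsingSeq S Φ D j)
    (hno : ∀ τ, ¬ OutwardlyMatched Φ D τ) :
    ∃ v ∈ D, IsCollapsingSeqOn S (Φ.filter (fun p => p.1 ∈ D ∧ p.2 ∈ D)) D v := by
  obtain ⟨⟨v, hvD, ⟨⟨hdvf, hac⟩, hv0, hcrit⟩⟩, -⟩ := hΦ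
  have hsub : ∀ p ∈ Φ.filter (fun p => p.1 ∈ D ∧ p.2 ∈ D), p ∈ Φ :=
    fun p hp => (Finset.mem_filter.1 hp).1
  refine ⟨v, hvD, ⟨⟨⟨fun p hp => hdvf.1 p (hsub p hp),
    fun p hp q hq => hdvf.2 p (hsub p hp) q (hsub q hq)⟩, ?_⟩, hvD, hv0,
    fun p hp => (Finset.mem_filter.1 hp).2, ?_⟩⟩
  · rintro ⟨k, σ, T, hk, h1, h2, h3⟩
    exact hac ⟨k, σ, T, hk, fun i hi => hsub _ (h1 i hi), h2, h3⟩
  · intro x hx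
    constructor
    · intro h
      rw [← hcrit x]
      intro p hp
      constructor
      · rintro rfl
        by_cases h2 : p.2 ∈ D
        · exact (h p (Finset.mem_filter.2 ⟨hp, hx, h2⟩)).1 rfl
        · exact hno p.1 ⟨hx, p, hp, Or.inl ⟨rfl, h2⟩⟩
      · rintro rfl
        by_cases h2 : p.1 ∈ D
        · exact (h p (Finset.mem_filter.2 ⟨hp, h2, hx⟩)).2 rfl
        · exact hno p.2 ⟨hx, p, hp, Or.inr ⟨rfl, h2⟩⟩
    · rintro rfl p hp
      exact (hcrit x).2 rfl p (hsub p hp)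

end AS

/-- Let `(C, D)` be an out-`j` collapsible pair with `D` nonempty. If the
subcomplex `D` is contractible then there are no outwardly matched faces, the collapsing
sequence restricts to a collapsing sequence of `D` onto a vertex, and hence `D` is
collapsible. -/
theorem stmt1 {F X : Type} [Fintype F] [DecidableEq F] [TopologicalSpace X] [T2Space X]
    (C : RegularCW F X) (D : Finset F) (hD : C.Subcomplex D) (hDne : D.Nonempty)
    (j : ℕ) (Φ : Finset (F × F)) (hΦ : IsOutJCollapsingSeq C.toSetup Φ D j)
    (hcontr : ContractibleSpace (C.real D)) :
    Nat.card {τ : F // OutwardlyMatched Φ D τ} = 0 ∧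
      ∃ v ∈ D, IsCollapsingSeqOn C.toSetup
        (Φ.filter (fun p => p.1 ∈ D ∧ p.2 ∈ D)) D v := by
  have hno := AS.count_zero C.toSetup (fun _ h => h.1 rfl) D j Φ hΦ
    (AS.euler_one C D hD hcontr)
  refine ⟨?_, AS.restrict C.toSetup D j Φ hΦ hno⟩
  have : IsEmpty {τ : F // OutwardlyMatched Φ D τ} := ⟨fun x => hno x.1 x.2⟩
  exact Nat.card_of_isEmpty
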